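/- arXiv:2207.13282 — 6 statements merged into one kernel-verified Lean document; each statement's English description precedes it below -/
import Mathlib

section
/- Let m, n ≥ 2 be integers. The number of proper 3-colorings of the rectangular grid graph with m+1 columns and n+1 rows (i.e., functions h : {1,…,m+1}×{1,…,n+1} → 𝔽₃ with h_{i+1,j} ≠ h_{i,j} and h_{i,j+1} ≠ h_{i,j} for all valid i, j) is exactly three times the number of admissible closed 1-forms on the m×n grid (equivalently, three times the number of admissible states of the six-vertex model). -/
/-- There are three times as many proper 3-colorings of the (m+1)×(n+1) grid graph
as there are admissible closed 1-forms on the m×n grid. -/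
theorem stmt_2 (m n : ℕ) (hm : 2 ≤ m) (hn : 2 ≤ n) :
    Nat.card {h : Fin (m + 1) → Fin (n + 1) → ZMod 3 //
        (∀ (i : Fin m) (j : Fin (n + 1)), h i.castSucc j ≠ h i.succ j) ∧
        (∀ (i : Fin (m + 1)) (j : Fin n), h i j.castSucc ≠ h i j.succ)} =
    3 * Nat.card {q : (Fin m → Fin (n + 1) → ZMod 3) × (Fin (m + 1) → Fin n → ZMod 3) //
        (∀ (i : Fin m) (j : Fin n),
          q.1 i j.succ - q.1 i j.castSucc = q.2 i.succ j - q.2 i.castSucc j) ∧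
        (∀ i j, q.1 i j ≠ 2) ∧ (∀ i j, q.2 i j ≠ 2)} := by
  have key : ∀ a b : ZMod 3, a ≠ b → b - a - 1 ≠ 2 := by decide
  have key2 : ∀ a b : ZMod 3, b - a - 1 ≠ 2 → a ≠ b := by decide
  have h3 : Nat.card (ZMod 3) = 3 := by simp
  refine Eq.trans ?_ (congrArg (· * _) h3)
  beta_reduce
  rw [← Nat.card_prod]
  refine Nat.card_eq_of_bijective (fun h => (h.1 0 0,
    ⟨(fun i j => h.1 i.succ j - h.1 i.castSucc j - 1,
      fun i j => h.1 i j.succ - h.1 i j.castSucc - 1), ?_, ?_, ?_⟩)) ⟨?_, ?_⟩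
  · intro i j
    simp only
    ring
  · intro i j
    exact key _ _ (h.2.1 i j)
  · intro i j
    exact key _ _ (h.2.2 i j)
  · rintro ⟨h, hh⟩ ⟨k, hk⟩ e
    simp only [Prod.mk.injEq, Subtype.mk.injEq] at e
    obtain ⟨e0, e1, e2⟩ := e
    have h0 : ∀ i, h i 0 = k i 0 := by
      intro i
      induction i using Fin.induction with
      | zero => exact e0
      | succ i ih =>
        have := congrFun (congrFun e1 i) 0
        linear_combination this + ih
    apply Subtype.ext
    funext i j
    show h i j = k i j
    induction j using Fin.induction with
    | zero => exact h0 i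
    | succ j ih =>
      have := congrFun (congrFun e2 i) j
      linear_combination this + ih
  · rintro ⟨c, ⟨f, g⟩, hc, hf, hg⟩
    simp only at hc hf hg
    obtain ⟨r, r0, rs⟩ : ∃ r : Fin (m + 1) → ZMod 3, r 0 = c ∧
        ∀ i : Fin m, r i.succ = r i.castSucc + f i 0 + 1 :=
      ⟨fun i => Fin.induction (motive := fun _ => ZMod 3) c (fun k p => p + f k 0 + 1) i,
        rfl, fun i => by simp only [Fin.induction_succ]⟩
    obtain ⟨h, h0, hs⟩ : ∃ h : Fin (m + 1) → Fin (n + 1) → ZMod 3, (∀ i, h i 0 = r i) ∧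
        ∀ i, ∀ j : Fin n, h i j.succ = h i j.castSucc + g i j + 1 :=
      ⟨fun i j => Fin.induction (motive := fun _ => ZMod 3) (r i) (fun k p => p + g i k + 1) j,
        fun i => rfl, fun i j => by simp only [Fin.induction_succ]⟩
    have hx : ∀ (i : Fin m) (j : Fin (n + 1)), h i.succ j - h i.castSucc j - 1 = f i j := by
      intro i j
      induction j using Fin.induction with
      | zero => rw [h0, h0, rs]; ring
      | succ j ih =>
        rw [hs, hs]
        linear_combination ih - hc i j
    have hy : ∀ (i : Fin (m + 1)) (j : Fin n), h i j.succ - h i j.castSucc - 1 = g i j := by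
      intro i j
      rw [hs]; ring
    refine ⟨⟨h, fun i j => key2 _ _ ?_, fun i j => key2 _ _ ?_⟩, ?_⟩
    · rw [hx]; exact hf i j
    · rw [hy]; exact hg i j
    · simp only [hx, hy, h0, r0]
end

section
/- Let m, n ≥ 2 be integers not divisible by 3. (a) Every admissible closed toroidal 1-form ω over 𝔽₃ can be written uniquely as ω = r dx + s dy + dh, where r, s ∈ 𝔽₃ and h is a sparse function; in particular the map sending ω to this h is a well-defined surjection from admissible closed toroidal 1-forms onto sparse functions. (b) Conversely, for every sparse function h there exist r, s ∈ 𝔽₃ (namely any r with 2 − r not in the image of D_x h and any s with 2 − s not in the image of D_y h) such that r dx + s dy + dh is an admissible closed toroidal 1-form. -/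
/-- A doubly periodic 𝔽₃-valued function on ℤ×ℤ. -/
def DoublyPeriodic (m n : ℕ) (h : ℤ → ℤ → ZMod 3) : Prop :=
  ∀ i j : ℤ, h (i + m) j = h i j ∧ h i (j + n) = h i j

/-- Discrete partial derivative in the x-direction. -/
def Dx (h : ℤ → ℤ → ZMod 3) : ℤ → ℤ → ZMod 3 := fun i j => h (i + 1) j - h i j

/-- Discrete partial derivative in the y-direction. -/
def Dy (h : ℤ → ℤ → ZMod 3) : ℤ → ℤ → ZMod 3 := fun i j => h i (j + 1) - h i j

/-- A doubly periodic function is sparse if neither D_x h nor D_y h is surjective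
and h_{1,1} = 0. -/
def Sparse (m n : ℕ) (h : ℤ → ℤ → ZMod 3) : Prop :=
  DoublyPeriodic m n h ∧
  ¬ Function.Surjective (fun p : ℤ × ℤ => Dx h p.1 p.2) ∧
  ¬ Function.Surjective (fun p : ℤ × ℤ => Dy h p.1 p.2) ∧
  h 1 1 = 0

/-- Every function on the integers has a discrete primitive vanishing at 1. -/
theorem exists_prim (u : ℤ → ZMod 3) :
    ∃ U : ℤ → ZMod 3, U 1 = 0 ∧ ∀ i, U (i + 1) = U i + u i := by
  let V : ℤ → ZMod 3 := fun i =>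
    ∑ x ∈ Finset.range i.toNat, u x - ∑ x ∈ Finset.range (-i).toNat, u (-(x : ℤ) - 1)
  have hV : ∀ i, V (i + 1) = V i + u i := by
    intro i
    rcases le_or_gt 0 i with hi | hi
    · obtain ⟨k, rfl⟩ := Int.eq_ofNat_of_zero_le hi
      have h1 : ((k : ℤ) + 1).toNat = k + 1 := by omega
      have h2 : (-((k : ℤ) + 1)).toNat = 0 := by omega
      have h3 : (-(k : ℤ)).toNat = 0 := by omega
      simp only [V, h1, h2, h3, Finset.sum_range_succ, Int.toNat_natCast]
      simp
    · obtain ⟨k, rfl⟩ : ∃ k : ℕ, i = -(k : ℤ) - 1 := ⟨(-i - 1).toNat, by omega⟩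
      have h1 : (-(k : ℤ) - 1 + 1).toNat = 0 := by omega
      have h2 : (-(-(k : ℤ) - 1 + 1)).toNat = k := by omega
      have h3 : (-(k : ℤ) - 1).toNat = 0 := by omega
      have h4 : (-(-(k : ℤ) - 1)).toNat = k + 1 := by omega
      simp only [V, h1, h2, h3, h4, Finset.sum_range_succ]
      ring
  exact ⟨fun i => V i - V 1, by simp, fun i => by simp only [hV i]; ring⟩

/-- A function with constant difference is affine. -/
theorem affine_of_diff (u : ℤ → ZMod 3) (c : ZMod 3) (hu : ∀ i, u (i + 1) = u i + c) (i k : ℤ) :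
    u (i + k) = u i + k * c := by
  induction k using Int.induction_on with
  | zero => simp
  | succ k ih =>
    rw [← add_assoc, hu, ih]; push_cast; ring
  | pred k ih =>
    have := hu (i + (-(k : ℤ) - 1))
    rw [show i + (-(k : ℤ) - 1) + 1 = i + -(k : ℤ) by ring, ih] at this
    rw [eq_sub_of_add_eq this.symm]; push_cast; ring

/-- Constancy of functions with zero differences. -/
theorem const_of_diff (k : ℤ → ℤ → ZMod 3) (hx : ∀ i j, k (i + 1) j = k i j)
    (hy : ∀ i j, k i (j + 1) = k i j) (i j : ℤ) : k i j = k 1 1 := by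
  have h1 := affine_of_diff (fun i => k i j) 0 (fun i => by simp [hx]) 1 (i - 1)
  have h2 := affine_of_diff (fun j => k 1 j) 0 (fun i => by simp [hy]) 1 (j - 1)
  simp at h1 h2
  rw [h1, h2]

/-- A discrete closed form on the plane has a primitive. -/
theorem exists_potential (f g : ℤ → ℤ → ZMod 3) (hc : ∀ i j : ℤ, Dy f i j = Dx g i j) :
    ∃ H : ℤ → ℤ → ZMod 3, H 1 1 = 0 ∧ (∀ i j, H (i + 1) j = H i j + f i j) ∧
      (∀ i j, H i (j + 1) = H i j + g i j) := by
  obtain ⟨U, hU1, hU⟩ := exists_prim (fun i => f i 1)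
  choose V hV1 hV using fun i => exists_prim (g i)
  refine ⟨fun i j => U i + V i j, by simp [hU1, hV1], fun i j => ?_, fun i j => ?_⟩
  · have h := affine_of_diff (fun j => V (i + 1) j - V i j - f i j) 0 (fun j => by
      have := hc i j
      simp only [Dx, Dy] at this
      simp only [hV]
      linear_combination -this) 1 (j - 1)
    simp [hV1] at h
    simp only [hU]
    linear_combination h
  · simp only [hV]; ring

/-- (a) Every admissible closed toroidal 1-form is uniquely r dx + s dy + dh with h sparse;
(b) conversely, for every sparse h and any r, s with 2 − r ∉ Im D_x h, 2 − s ∉ Im D_y h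
(such r, s exist), the form r dx + s dy + dh is an admissible closed toroidal 1-form. -/
theorem stmt_7 (m n : ℕ) (hm : 2 ≤ m) (hn : 2 ≤ n) (h3m : ¬ (3 ∣ m)) (h3n : ¬ (3 ∣ n)) :
    (∀ f g : ℤ → ℤ → ZMod 3,
      DoublyPeriodic m n f → DoublyPeriodic m n g →
      (∀ i j : ℤ, Dy f i j = Dx g i j) →
      (∀ i j : ℤ, f i j ≠ 2) → (∀ i j : ℤ, g i j ≠ 2) →
      ∃! rsh : ZMod 3 × ZMod 3 × (ℤ → ℤ → ZMod 3),
        Sparse m n rsh.2.2 ∧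
        (∀ i j : ℤ, f i j = rsh.1 + Dx rsh.2.2 i j) ∧
        (∀ i j : ℤ, g i j = rsh.2.1 + Dy rsh.2.2 i j)) ∧
    (∀ h : ℤ → ℤ → ZMod 3, Sparse m n h →
      (∃ r s : ZMod 3,
        (2 - r) ∉ Set.range (fun p : ℤ × ℤ => Dx h p.1 p.2) ∧
        (2 - s) ∉ Set.range (fun p : ℤ × ℤ => Dy h p.1 p.2)) ∧
      (∀ r s : ZMod 3,
        (2 - r) ∉ Set.range (fun p : ℤ × ℤ => Dx h p.1 p.2) →
        (2 - s) ∉ Set.range (fun p : ℤ × ℤ => Dy h p.1 p.2) →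
        DoublyPeriodic m n (fun i j => r + Dx h i j) ∧
        DoublyPeriodic m n (fun i j => s + Dy h i j) ∧
        (∀ i j : ℤ, Dy (fun i j => r + Dx h i j) i j = Dx (fun i j => s + Dy h i j) i j) ∧
        (∀ i j : ℤ, r + Dx h i j ≠ 2) ∧ (∀ i j : ℤ, s + Dy h i j ≠ 2))) := by
  have hm0 : (m : ZMod 3) ≠ 0 := by rwa [Ne, ZMod.natCast_eq_zero_iff]
  have hn0 : (n : ZMod 3) ≠ 0 := by rwa [Ne, ZMod.natCast_eq_zero_iff]
  have : Fact (Nat.Prime 3) := ⟨by norm_num⟩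
  refine ⟨?_, ?_⟩
  · intro f g hf hg hc hf2 hg2
    obtain ⟨H, H1, Hx, Hy⟩ := exists_potential f g hc
    have hA : ∀ i j, H (i + m) j - H i j = H (1 + m) 1 - H 1 1 :=
      const_of_diff (fun i j => H (i + m) j - H i j)
        (fun i j => by
          simp only [Hx, show i + 1 + (m : ℤ) = i + m + 1 by ring, (hf i j).1]; ring)
        (fun i j => by simp only [Hy, (hg i j).1]; ring)
    have hB : ∀ i j, H i (j + n) - H i j = H 1 (1 + n) - H 1 1 :=
      const_of_diff (fun i j => H i (j + n) - H i j)
        (fun i j => by simp only [Hx, (hf i j).2]; ring)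
        (fun i j => by
          simp only [Hy, show j + 1 + (n : ℤ) = j + n + 1 by ring, (hg i j).2]; ring)
    obtain ⟨r, hr⟩ : ∃ r : ZMod 3, m * r = H (1 + m) 1 - H 1 1 :=
      ⟨(H (1 + m) 1 - H 1 1) / m, by field_simp⟩
    obtain ⟨s, hs⟩ : ∃ s : ZMod 3, n * s = H 1 (1 + n) - H 1 1 :=
      ⟨(H 1 (1 + n) - H 1 1) / n, by field_simp⟩
    refine ⟨(r, s, fun i j => H i j - r * (i - 1) - s * (j - 1)), ⟨⟨?_, ?_, ?_, ?_⟩, ?_, ?_⟩, ?_⟩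
    · intro i j
      constructor
      · push_cast
        linear_combination hA i j - hr
      · push_cast
        linear_combination hB i j - hs
    · intro hsurj
      obtain ⟨p, hp⟩ := hsurj (2 - r)
      simp only [Dx, Hx] at hp
      push_cast at hp
      exact hf2 p.1 p.2 (by linear_combination hp)
    · intro hsurj
      obtain ⟨p, hp⟩ := hsurj (2 - s)
      simp only [Dy, Hy] at hp
      push_cast at hp
      exact hg2 p.1 p.2 (by linear_combination hp)
    · simp [H1]
    · intro i j
      simp only [Dx, Hx]
      push_cast
      ring
    · intro i j
      simp only [Dy, Hy]
      push_cast
      ring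
    · rintro ⟨r', s', h⟩ ⟨⟨hp, -, -, h1⟩, hx, hy⟩
      simp only [Dx, Dy] at hp h1 hx hy
      -- the difference H - h is affine
      have ex : ∀ i j k, H (i + k) j - h (i + k) j = H i j - h i j + (k : ℤ) * r' := fun i j k =>
        affine_of_diff (fun i => H i j - h i j) r'
          (fun i => by simp only [Hx]; linear_combination hx i j) i k
      have ey : ∀ i j k, H i (j + k) - h i (j + k) = H i j - h i j + (k : ℤ) * s' := fun i j k =>
        affine_of_diff (fun j => H i j - h i j) s'
          (fun j => by simp only [Hy]; linear_combination hy i j) j k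
      have er : r' = r := by
        have e := ex 1 1 m
        push_cast at e
        exact mul_left_cancel₀ hm0 (by linear_combination -(hp 1 1).1 - e - hr)
      have es : s' = s := by
        have e := ey 1 1 n
        push_cast at e
        exact mul_left_cancel₀ hn0 (by linear_combination -(hp 1 1).2 - e - hs)
      subst er es
      refine Prod.ext rfl (Prod.ext rfl ?_)
      funext i j
      have e1 := ex 1 j (i - 1)
      have e2 := ey 1 1 (j - 1)
      simp only [add_sub_cancel] at e1 e2
      push_cast at e1 e2
      show h i j = H i j - r' * (i - 1) - s' * (j - 1)
      linear_combination -e1 - e2 - H1 + h1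
  · rintro h ⟨hp, hx, hy, h1⟩
    refine ⟨?_, ?_⟩
    · simp only [Function.Surjective, not_forall] at hx hy
      obtain ⟨a, ha⟩ := hx
      obtain ⟨b, hb⟩ := hy
      exact ⟨2 - a, 2 - b, by simpa using ha, by simpa using hb⟩
    · intro r s hr hs
      refine ⟨?_, ?_, ?_, ?_, ?_⟩
      · intro i j
        simp only [Dx]
        rw [show i + (m : ℤ) + 1 = i + 1 + m by ring, (hp _ _).1, (hp _ _).1, (hp _ _).2,
          (hp _ _).2]
        simp
      · intro i j
        simp only [Dy]
        rw [show j + (n : ℤ) + 1 = j + 1 + n by ring, (hp _ _).1, (hp _ _).1, (hp _ _).2,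
          (hp _ _).2]
        simp
      · intro i j
        simp only [Dx, Dy]
        ring
      · intro i j e
        exact hr ⟨(i, j), by linear_combination e⟩
      · intro i j e
        exact hs ⟨(i, j), by linear_combination e⟩
end

section
/- Let m, n ≥ 2 be integers. The set of admissible states of the eight-vertex model on the m×n lattice, i.e., the kernel of the 𝔽₂-linear map φ(f,g)_{i,j} = f_{i,j} + g_{i,j} + f_{i,j+1} + g_{i+1,j} on pairs (f, g) with f : {1,…,m}×{1,…,n+1} → 𝔽₂ and g : {1,…,m+1}×{1,…,n} → 𝔽₂, is an 𝔽₂-vector space of dimension mn + m + n. -/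
/-- The kernel of the 𝔽₂-linear map φ(f,g)_{i,j} = f_{i,j} + g_{i,j} + f_{i,j+1} + g_{i+1,j}
(i.e., the space of admissible eight-vertex states) has dimension mn + m + n over 𝔽₂. -/
theorem stmt_10 (m n : ℕ) (hm : 2 ≤ m) (hn : 2 ≤ n) :
    ∃ φ : ((Fin m → Fin (n + 1) → ZMod 2) × (Fin (m + 1) → Fin n → ZMod 2)) →ₗ[ZMod 2]
        (Fin m × Fin n → ZMod 2),
      (∀ p (i : Fin m) (j : Fin n), φ p (i, j) =
        p.1 i j.castSucc + p.2 i.castSucc j + p.1 i j.succ + p.2 i.succ j) ∧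
      Module.finrank (ZMod 2) (LinearMap.ker φ) = m * n + m + n := by
  let φ : ((Fin m → Fin (n + 1) → ZMod 2) × (Fin (m + 1) → Fin n → ZMod 2)) →ₗ[ZMod 2]
        (Fin m × Fin n → ZMod 2) :=
    { toFun := fun p x => p.1 x.1 x.2.castSucc + p.2 x.1.castSucc x.2 + p.1 x.1 x.2.succ
        + p.2 x.1.succ x.2
      map_add' := by
        intro p q
        ext x
        simp only [Prod.fst_add, Prod.snd_add, Pi.add_apply]
        ring
      map_smul' := by
        intro c p
        ext x
        simp only [Prod.smul_fst, Prod.smul_snd, Pi.smul_apply, smul_eq_mul, RingHom.id_apply]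
        ring }
  have hφ : ∀ p (i : Fin m) (j : Fin n), φ p (i, j) =
        p.1 i j.castSucc + p.2 i.castSucc j + p.1 i j.succ + p.2 i.succ j :=
    fun p i j => rfl
  refine ⟨φ, hφ, ?_⟩
  have hsurj : Function.Surjective φ := by
    intro h
    refine ⟨(fun i k => Fin.induction (motive := fun _ => ZMod 2) 0
      (fun j x => x + h (i, j)) k, 0), ?_⟩
    ext ⟨i, j⟩
    rw [hφ]
    simp only [Fin.induction_succ, Pi.zero_apply, add_zero]
    rw [← add_assoc, CharTwo.add_self_eq_zero, zero_add]
  have h1 := LinearMap.finrank_range_add_finrank_ker φ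
  rw [LinearMap.range_eq_top.mpr hsurj, finrank_top] at h1
  simp only [Module.finrank_prod, Module.finrank_pi_fintype, Module.finrank_self,
    Module.finrank_fintype_fun_eq_card, Fintype.card_prod, Fintype.card_fin, Finset.sum_const,
    Finset.card_univ, smul_eq_mul] at h1
  nlinarith [h1]
end

section
/- Let m, n ≥ 2 be integers and let prescribed boundary values f_{i,1}, f_{i,n+1} (1 ≤ i ≤ m), g_{1,j}, g_{m+1,j} (1 ≤ j ≤ n) in 𝔽₂ satisfy Σ_{i=1}^{m} (f_{i,1} + f_{i,n+1}) + Σ_{j=1}^{n} (g_{1,j} + g_{m+1,j}) = 0. Then the number of admissible states of the eight-vertex model on the m×n lattice with exactly these boundary values is 2^{(m−1)(n−1)}. -/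
theorem tele_aux {n : ℕ} (u : Fin (n + 1) → ZMod 2) (f : Fin n → ZMod 2)
    (h : ∀ j : Fin n, u j.succ = u j.castSucc + f j) : u (Fin.last n) = u 0 + ∑ j, f j := by
  induction n with
  | zero => simp
  | succ n ih =>
    have h1 := ih (fun j => u j.castSucc) (fun j => f j.castSucc) (fun j => h j.castSucc)
    rw [Fin.sum_univ_castSucc, ← add_assoc, ← Fin.succ_last, h]
    exact congrArg (· + f (Fin.last n)) h1

theorem two_aux (x : ZMod 2) : (2 : ZMod 2) * x = 0 := by
  have : (2 : ZMod 2) = 0 := rfl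
  rw [this, zero_mul]

/-- A state: `g` satisfies the row recursion. -/
theorem col_aux {m n : ℕ} (f : Fin m → Fin (n + 1) → ZMod 2) (g : Fin (m + 1) → Fin n → ZMod 2)
    (h : ∀ (i : Fin m) (j : Fin n),
        f i j.castSucc + g i.castSucc j + f i j.succ + g i.succ j = 0) (j : Fin n) :
    ∑ i, f i j.succ = ∑ i, f i j.castSucc + (g 0 j + g (Fin.last m) j) := by
  have h1 := tele_aux (fun i => g i j) (fun i => f i j.castSucc + f i j.succ) (fun i => by
    have := h i j
    linear_combination this - two_aux (g i.castSucc j) - two_aux (f i j.castSucc)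
      - two_aux (f i j.succ))
  rw [Finset.sum_add_distrib] at h1
  linear_combination -h1 - two_aux (g 0 j) - two_aux (∑ i, f i j.castSucc)

/-- For any boundary values summing to 0 in 𝔽₂, the number of admissible eight-vertex
states with exactly these boundary values is 2^((m−1)(n−1)). -/
theorem stmt_13 (m n : ℕ) (hm : 2 ≤ m) (hn : 2 ≤ n)
    (bS bN : Fin m → ZMod 2) (bW bE : Fin n → ZMod 2)
    (hsum : ∑ i, (bS i + bN i) + ∑ j, (bW j + bE j) = 0) :
    Nat.card {p : (Fin m → Fin (n + 1) → ZMod 2) × (Fin (m + 1) → Fin n → ZMod 2) //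
      (∀ (i : Fin m) (j : Fin n),
        p.1 i j.castSucc + p.2 i.castSucc j + p.1 i j.succ + p.2 i.succ j = 0) ∧
      (∀ i : Fin m, p.1 i 0 = bS i ∧ p.1 i (Fin.last n) = bN i) ∧
      (∀ j : Fin n, p.2 0 j = bW j ∧ p.2 (Fin.last m) j = bE j)} =
    2 ^ ((m - 1) * (n - 1)) := by
  obtain ⟨m, rfl⟩ : ∃ k, m = k + 1 := ⟨m - 1, by omega⟩
  obtain ⟨n, rfl⟩ : ∃ k, n = k + 1 := ⟨n - 1, by omega⟩
  have hcard : Nat.card (Fin m → Fin n → ZMod 2) = 2 ^ ((m + 1 - 1) * (n + 1 - 1)) := by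
    simp [← pow_mul, mul_comm]
  rw [← hcard]
  apply Nat.card_eq_of_bijective (fun p => fun i j => p.1.1 i.castSucc j.castSucc.succ)
  constructor
  · rintro ⟨⟨f, g⟩, h1, h2, h3⟩ ⟨⟨fb, gb⟩, k1, k2, k3⟩ heq
    simp only at h1 h2 h3 k1 k2 k3 heq
    have hcol : ∀ j, ∑ i, f i j = ∑ i, fb i j := by
      intro j
      induction j using Fin.induction with
      | zero => simp [h2, k2]
      | succ j ih =>
        rw [col_aux f g h1, col_aux fb gb k1, ih]
        simp [h3, k3]
    have hf0 : ∀ (i : Fin m) j, f i.castSucc j = fb i.castSucc j := by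
      intro i j
      induction j using Fin.cases with
      | zero => simp [h2, k2]
      | succ j =>
        induction j using Fin.lastCases with
        | last => rw [Fin.succ_last, (h2 _).2, (k2 _).2]
        | cast j => exact congrFun (congrFun heq i) j
    have hf : f = fb := by
      funext i j
      induction i using Fin.lastCases with
      | last =>
        have := hcol j
        rw [Fin.sum_univ_castSucc, Fin.sum_univ_castSucc] at this
        simpa [hf0] using this
      | cast i => exact hf0 i j
    subst hf
    have hg : g = gb := by
      funext i j
      induction i using Fin.induction with
      | zero => simp [h3, k3]
      | succ i ih =>
        have a := h1 i j
        have b := k1 i j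
        rw [ih] at a
        exact add_left_cancel (a.trans b.symm)
    subst hg
    rfl
  · intro h
    let F0 : Fin m → Fin (n + 2) → ZMod 2 := fun i =>
      Fin.cons (bS i.castSucc) (Fin.snoc (h i) (bN i.castSucc) : Fin (n + 1) → ZMod 2)
    let c : Fin (n + 2) → ZMod 2 := fun j => ∑ i, bS i + Fin.partialSum (fun j => bW j + bE j) j
    have c0 : c 0 = ∑ i, bS i := by simp [c]
    have cs : ∀ j : Fin (n + 1), c j.succ = c j.castSucc + (bW j + bE j) := by
      intro j; simp [c, Fin.partialSum_succ, add_assoc]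
    have cl : c (Fin.last _) = ∑ i, bN i := by
      rw [tele_aux c _ cs, c0]
      rw [Finset.sum_add_distrib] at hsum
      linear_combination hsum - two_aux (∑ i, bN i)
    let F : Fin (m + 1) → Fin (n + 2) → ZMod 2 :=
      Fin.snoc (α := fun _ => Fin (n + 2) → ZMod 2) F0 (fun j => c j - ∑ i, F0 i j)
    have Fc : ∀ i : Fin m, F i.castSucc = F0 i := fun i => by simp [F]
    have Fl : ∀ j, F (Fin.last m) j = c j - ∑ i, F0 i j := fun i => by simp [F]
    have Fcol : ∀ j, ∑ i, F i j = c j := by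
      intro j
      rw [Fin.sum_univ_castSucc, Fl]
      simp [Fc]
    let G : Fin (m + 2) → Fin (n + 1) → ZMod 2 := fun i j =>
      bW j + Fin.partialSum (fun k => F k j.castSucc + F k j.succ) i
    have G0 : ∀ j, G 0 j = bW j := by intro j; simp [G]
    have Gs : ∀ (i : Fin (m + 1)) j,
        G i.succ j = G i.castSucc j + (F i j.castSucc + F i j.succ) := by
      intro i j; simp [G, Fin.partialSum_succ, add_assoc]
    have F00 : ∀ i, F0 i 0 = bS i.castSucc := fun i => by simp [F0]
    have F0l : ∀ i, F0 i (Fin.last _) = bN i.castSucc := fun i => by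
      simp [F0, ← Fin.succ_last]
    refine ⟨⟨(F, G), ?_, ?_, ?_⟩, ?_⟩
    · intro i j
      simp only [Gs]
      linear_combination two_aux (F i j.castSucc) + two_aux (F i j.succ) + two_aux (G i.castSucc j)
    · intro i
      induction i using Fin.lastCases with
      | last =>
        simp only [Fl, c0, cl, F00, F0l]
        constructor <;> rw [Fin.sum_univ_castSucc] <;> ring
      | cast i => simp only [Fc, F00, F0l, and_self]
    · intro j
      refine ⟨G0 j, ?_⟩
      have := tele_aux (fun i => G i j) _ (fun i => Gs i j)
      simp only [Finset.sum_add_distrib, Fcol, cs, G0] at this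
      simp only
      linear_combination this + two_aux (bW j) + two_aux (c j.castSucc)
    · funext i j
      simp [Fc, F0]
end

section
/- Let F be a field and let R, S, T be eight-vertex matrices over F satisfying the Yang–Baxter commutator relation [[R, S, T]] = 0. Then the following four equations hold: c₁(T)c₋₁(S)c₁(R) = c₋₁(T)c₁(S)c₋₁(R); d₁(T)c₁(S)d₋₁(R) = d₋₁(T)c₋₁(S)d₁(R); c₁(T)d₁(S)d₋₁(R) = c₋₁(T)d₋₁(S)d₁(R); and d₁(T)d₋₁(S)c₁(R) = d₋₁(T)d₁(S)c₋₁(R). -/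
/-- The operator φ₁₂ acting on factors 1 and 2 of V⊗V⊗V, as a matrix (row = output
index, column = input index; the entry at row (θ,γ), column (ν,β) of `R` is R_{νβ}^{θγ}). -/
def op12 {F : Type*} [Field F] (R : Matrix (Fin 2 × Fin 2) (Fin 2 × Fin 2) F) :
    Matrix (Fin 2 × Fin 2 × Fin 2) (Fin 2 × Fin 2 × Fin 2) F :=
  Matrix.of fun p q => if p.2.2 = q.2.2 then R (p.1, p.2.1) (q.1, q.2.1) else 0

/-- The operator φ₁₃ acting on factors 1 and 3 of V⊗V⊗V. -/
def op13 {F : Type*} [Field F] (R : Matrix (Fin 2 × Fin 2) (Fin 2 × Fin 2) F) :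
    Matrix (Fin 2 × Fin 2 × Fin 2) (Fin 2 × Fin 2 × Fin 2) F :=
  Matrix.of fun p q => if p.2.1 = q.2.1 then R (p.1, p.2.2) (q.1, q.2.2) else 0

/-- The operator φ₂₃ acting on factors 2 and 3 of V⊗V⊗V. -/
def op23 {F : Type*} [Field F] (R : Matrix (Fin 2 × Fin 2) (Fin 2 × Fin 2) F) :
    Matrix (Fin 2 × Fin 2 × Fin 2) (Fin 2 × Fin 2 × Fin 2) F :=
  Matrix.of fun p q => if p.1 = q.1 then R (p.2.1, p.2.2) (q.2.1, q.2.2) else 0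

/-- An eight-vertex matrix: R_{νβ}^{θγ} = 0 whenever ν + β ≢ θ + γ (mod 2). -/
def EightVertex {F : Type*} [Field F]
    (R : Matrix (Fin 2 × Fin 2) (Fin 2 × Fin 2) F) : Prop :=
  ∀ ν β θ γ : Fin 2, (ν.val + β.val) % 2 ≠ (θ.val + γ.val) % 2 → R (θ, γ) (ν, β) = 0

/-- The Boltzmann weight a_i (i = ±1): a₁(R) = R_{00}^{00}, a₋₁(R) = R_{11}^{11}. -/
def wa {F : Type*} [Field F] (R : Matrix (Fin 2 × Fin 2) (Fin 2 × Fin 2) F) (i : ℤ) : F :=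
  if i = 1 then R (0, 0) (0, 0) else R (1, 1) (1, 1)

/-- The Boltzmann weight b_i (i = ±1): b₁(R) = R_{01}^{01}, b₋₁(R) = R_{10}^{10}. -/
def wb {F : Type*} [Field F] (R : Matrix (Fin 2 × Fin 2) (Fin 2 × Fin 2) F) (i : ℤ) : F :=
  if i = 1 then R (0, 1) (0, 1) else R (1, 0) (1, 0)

/-- The Boltzmann weight c_i (i = ±1): c₁(R) = R_{10}^{01}, c₋₁(R) = R_{01}^{10}. -/
def wc {F : Type*} [Field F] (R : Matrix (Fin 2 × Fin 2) (Fin 2 × Fin 2) F) (i : ℤ) : F :=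
  if i = 1 then R (0, 1) (1, 0) else R (1, 0) (0, 1)

/-- The Boltzmann weight d_i (i = ±1): d₁(R) = R_{11}^{00}, d₋₁(R) = R_{00}^{11}. -/
def wd {F : Type*} [Field F] (R : Matrix (Fin 2 × Fin 2) (Fin 2 × Fin 2) F) (i : ℤ) : F :=
  if i = 1 then R (0, 0) (1, 1) else R (1, 1) (0, 0)

/-- Equations (7)–(10): for eight-vertex matrices with [[R,S,T]] = 0 we have the four
c/d relations. -/
theorem stmt_17 (F : Type*) [Field F]
    (R S T : Matrix (Fin 2 × Fin 2) (Fin 2 × Fin 2) F)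
    (hR : EightVertex R) (hS : EightVertex S) (hT : EightVertex T)
    (hybe : op12 R * op13 S * op23 T = op23 T * op13 S * op12 R) :
    wc T 1 * wc S (-1) * wc R 1 = wc T (-1) * wc S 1 * wc R (-1) ∧
    wd T 1 * wc S 1 * wd R (-1) = wd T (-1) * wc S (-1) * wd R 1 ∧
    wc T 1 * wd S 1 * wd R (-1) = wc T (-1) * wd S (-1) * wd R 1 ∧
    wd T 1 * wd S (-1) * wc R 1 = wd T (-1) * wd S 1 * wc R (-1) := by
  have key : ∀ p : Fin 2 × Fin 2 × Fin 2, (op12 R * op13 S * op23 T) p p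
      = (op23 T * op13 S * op12 R) p p := fun p => by rw [hybe]
  have h0 := key (0, 0, 0)
  have h1 := key (0, 0, 1)
  have h2 := key (0, 1, 0)
  have h3 := key (1, 0, 0)
  clear key hybe
  have e : ∀ M : Matrix (Fin 2 × Fin 2) (Fin 2 × Fin 2) F, EightVertex M →
      (M (0, 0) (0, 1) = 0 ∧ M (0, 0) (1, 0) = 0 ∧ M (1, 1) (0, 1) = 0 ∧ M (1, 1) (1, 0) = 0) ∧
      (M (0, 1) (0, 0) = 0 ∧ M (1, 0) (0, 0) = 0 ∧ M (0, 1) (1, 1) = 0 ∧ M (1, 0) (1, 1) = 0) := by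
    intro M hM
    refine ⟨⟨?_, ?_, ?_, ?_⟩, ?_, ?_, ?_, ?_⟩ <;> exact hM _ _ _ _ (by decide)
  obtain ⟨⟨r1, r2, r3, r4⟩, r5, r6, r7, r8⟩ := e R hR
  obtain ⟨⟨s1, s2, s3, s4⟩, s5, s6, s7, s8⟩ := e S hS
  obtain ⟨⟨t1, t2, t3, t4⟩, t5, t6, t7, t8⟩ := e T hT
  simp [Matrix.mul_apply, Fintype.sum_prod_type, Fin.sum_univ_two, op12, op13, op23,
    r1, r2, r3, r4, r5, r6, r7, r8, s1, s2, s3, s4, s5, s6, s7, s8,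
    t1, t2, t3, t4, t5, t6, t7, t8] at h0 h1 h2 h3
  have n : ¬ ((-1 : ℤ) = 1) := by decide
  simp only [wc, wd, if_true, if_neg n]
  refine ⟨?_, ?_, ?_, ?_⟩ <;> grind
end

section
/- Let F be a field, and let S, T be eight-vertex matrices over F all sixteen of whose Boltzmann weights a_{±1}(S), b_{±1}(S), c_{±1}(S), d_{±1}(S), a_{±1}(T), b_{±1}(T), c_{±1}(T), d_{±1}(T) are nonzero. Suppose there exists an eight-vertex matrix R over F with c₁(R), c₋₁(R), d₁(R), d₋₁(R) all nonzero such that [[R, S, T]] = 0. Then: (i) a₁(T)b₁(T)F(S) = a₋₁(T)b₋₁(T)F(S); (ii) a₁(S)b₁(S)F(T) = a₋₁(S)b₋₁(S)F(T); (iii) for each i ∈ {1, −1}, c_i(T)d_{−i}(T)·G_i(S,T)² = c_{−i}(T)d_i(T)·[a₁(T)b₁(T)F(S) − a₁(S)b₁(S)F(T)]²; and (iv) c₁(T)c₋₁(S)·d₋₁(T)d₁(S) = d₁(T)d₋₁(S)·c₋₁(T)c₁(S). -/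
/-- F(ψ) = a₁a₋₁ + b₁b₋₁ − c₁c₋₁ − d₁d₋₁. -/
def Fwt {F : Type*} [Field F] (ψ : Matrix (Fin 2 × Fin 2) (Fin 2 × Fin 2) F) : F :=
  wa ψ 1 * wa ψ (-1) + wb ψ 1 * wb ψ (-1) - wc ψ 1 * wc ψ (-1) - wd ψ 1 * wd ψ (-1)

/-- G_i(S,T) = c_{−i}(T)d_i(T)[b₋₁(S)a₁(S) + a₋₁(S)b₁(S)]
             − c_{−i}(S)d_i(S)[b₋₁(T)a₁(T) + a₋₁(T)b₁(T)]. -/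
def Gwt {F : Type*} [Field F] (i : ℤ)
    (S T : Matrix (Fin 2 × Fin 2) (Fin 2 × Fin 2) F) : F :=
  wc T (-i) * wd T i * (wb S (-1) * wa S 1 + wa S (-1) * wb S 1) -
    wc S (-i) * wd S i * (wb T (-1) * wa T 1 + wa T (-1) * wb T 1)


section NormalisedGauge

/-- Characteristic two: the certificate forcing the `T`-weights to have zero sum. -/
theorem ev_two_sqT {K : Type*} [Field K] (h2 : (2 : K) = 0)
    (ra1 ra2 rb1 rb2 rc rd sa1 sa2 sb1 sb2 sc sd ta1 ta2 tb1 tb2 tc td : K)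
    (e1 : ra1*sa1*td - rb1*sb1*td - rc*sd*ta1 + rd*sc*ta2 = 0)
    (e2 : ra1*sd*tb1 - rb2*sd*ta1 - rc*sb1*td + rd*sb2*tc = 0)
    (e3 : ra1*sd*tc - ra2*sc*td - rd*sa1*ta1 + rd*sb2*tb2 = 0)
    (e4 : ra1*sb1*tc - rb1*sa1*tc - rc*sc*tb1 + rd*sd*tb2 = 0)
    (e5 : ra1*sc*ta1 - rb2*sc*tb1 - rc*sa1*tc + rd*sa2*td = 0)
    (e6 : ra1*sc*td - ra2*sd*tc + rd*sa2*ta2 - rd*sb1*tb1 = 0)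
    (e7 : rb1*sd*td - rb2*sc*tc - rc*sa1*tb2 + rc*sb2*ta1 = 0)
    (e8 : ra2*sd*tb2 - rb1*sd*ta2 - rc*sb2*td + rd*sb1*tc = 0)
    (e9 : rb1*sc*tc - rb2*sd*td + rc*sa2*tb1 - rc*sb1*ta2 = 0)
    (e10 : ra2*sc*ta2 - rb1*sc*tb2 - rc*sa2*tc + rd*sa1*td = 0)
    (e11 : ra2*sa2*td - rb2*sb2*td - rc*sd*ta2 + rd*sc*ta1 = 0)
    (e12 : ra2*sb2*tc - rb2*sa2*tc - rc*sc*tb2 + rd*sd*tb1 = 0) :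
    rc*rd*((sa1*sa2 + sb1*sb2 - sc^2 - sd^2)*(ta1+ta2+tb1+tb2)^2) = 0 := by
  have : rc*rd*((sa1*sa2 + sb1*sb2 - sc^2 - sd^2)*(ta1^2+ta2^2+tb1^2+tb2^2)) = 0 := by
    linear_combination (rc*sc*ta2 + rd*sd*ta1)*e1 + (ra2*sc*tb2 + rb1*sc*ta2)*e2 + (rc*sa2*ta1 +
      rc*sb1*tb2)*e3 + (rc*sd*tb2 + rd*sc*tb1)*e4 + (ra2*sd*ta2 + rb1*sd*tb2)*e5 +
      (rc*sa1*ta2 + rc*sb2*tb1)*e6 + (rd*sa2*tb2 + rd*sb1*ta1)*e7 + (ra1*sc*tb1 +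
      rb2*sc*ta1)*e8 + (rd*sa1*tb1 + rd*sb2*ta2)*e9 + (ra1*sd*ta1 + rb2*sd*tb1)*e10 +
      (rc*sc*ta1 + rd*sd*ta2)*e11 + (rc*sd*tb1 + rd*sc*tb2)*e12 + (- ra1*ra2*sc*sd*ta1*ta2 -
      ra1*ra2*sc*sd*tb1*tb2 - ra1*rc*sa1*sc*ta2*td - ra1*rc*sb1*sd*tb2*tc -
      ra1*rd*sa1*sd*ta1*td - ra1*rd*sb1*sc*tb1*tc + ra2*rc*sa1*sd*ta2*tc +
      ra2*rc*sb1*sc*tb2*td - ra2*rd*sa2*sd*ta2*td - ra2*rd*sb2*sc*tb2*tc +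
      rb1*rb2*sc*sd*ta1*ta2 + rb1*rb2*sc*sd*tb1*tb2 + rb1*rc*sa1*sd*tb2*tc +
      rb1*rc*sb1*sc*ta2*td - rb1*rd*sa2*sd*tb2*td - rb1*rd*sb2*sc*ta2*tc +
      rb2*rc*sa2*sd*tb1*tc + rb2*rc*sb2*sc*ta1*td + rb2*rd*sa2*sc*tb2*tc +
      rb2*rd*sb2*sd*ta2*td + rc*rc*sc*sd*ta1*ta2 + rc*rc*sc*sd*tb1*tb2 +
      rc*rd*sa1*sa2*ta1*ta1 + rc*rd*sa1*sa2*tb2*tb2 + rc*rd*sa1*sb1*ta1*tb2 +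
      rc*rd*sa1*sb1*ta2*tb1 - rc*rd*sa2*sb2*ta1*tb2 - rc*rd*sa2*sb2*ta2*tb1 +
      rc*rd*sb1*sb2*ta2*ta2 + rc*rd*sb1*sb2*tb1*tb1 - rc*rd*sc*sc*ta1*ta1 -
      rc*rd*sc*sc*ta2*ta2 - rc*rd*sd*sd*tb1*tb1 - rc*rd*sd*sd*tb2*tb2 - rd*rd*sc*sd*ta1*ta2 -
      rd*rd*sc*sd*tb1*tb2)*h2
  linear_combination this + rc*rd*(sa1*sa2 + sb1*sb2 - sc^2 - sd^2)*(ta1*ta2+ta1*tb1+ta1*tb2+ta2*tb1+ta2*tb2+tb1*tb2)*h2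

/-- Characteristic two: the certificate forcing the `S`-weights to have zero sum. -/
theorem ev_two_sqS {K : Type*} [Field K] (h2 : (2 : K) = 0)
    (ra1 ra2 rb1 rb2 rc rd sa1 sa2 sb1 sb2 sc sd ta1 ta2 tb1 tb2 tc td : K)
    (e1 : ra1*sa1*td - rb1*sb1*td - rc*sd*ta1 + rd*sc*ta2 = 0)
    (e2 : ra1*sd*tb1 - rb2*sd*ta1 - rc*sb1*td + rd*sb2*tc = 0)
    (e3 : ra1*sd*tc - ra2*sc*td - rd*sa1*ta1 + rd*sb2*tb2 = 0)
    (e4 : ra1*sb1*tc - rb1*sa1*tc - rc*sc*tb1 + rd*sd*tb2 = 0)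
    (e5 : ra1*sc*ta1 - rb2*sc*tb1 - rc*sa1*tc + rd*sa2*td = 0)
    (e6 : ra1*sc*td - ra2*sd*tc + rd*sa2*ta2 - rd*sb1*tb1 = 0)
    (e7 : rb1*sd*td - rb2*sc*tc - rc*sa1*tb2 + rc*sb2*ta1 = 0)
    (e8 : ra2*sd*tb2 - rb1*sd*ta2 - rc*sb2*td + rd*sb1*tc = 0)
    (e9 : rb1*sc*tc - rb2*sd*td + rc*sa2*tb1 - rc*sb1*ta2 = 0)
    (e10 : ra2*sc*ta2 - rb1*sc*tb2 - rc*sa2*tc + rd*sa1*td = 0)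
    (e11 : ra2*sa2*td - rb2*sb2*td - rc*sd*ta2 + rd*sc*ta1 = 0)
    (e12 : ra2*sb2*tc - rb2*sa2*tc - rc*sc*tb2 + rd*sd*tb1 = 0) :
    rc*rd*((ta1*ta2 + tb1*tb2 - tc^2 - td^2)*(sa1+sa2+sb1+sb2)^2) = 0 := by
  have : rc*rd*((ta1*ta2 + tb1*tb2 - tc^2 - td^2)*(sa1^2+sa2^2+sb1^2+sb2^2)) = 0 := by
    linear_combination (ra2*sa2*tc + rb2*sb2*tc)*e1 + (rc*sb2*tc + rd*sb1*td)*e2 + (rc*sa1*ta2 +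
      rc*sb2*tb1)*e3 + (ra2*sb2*td + rb2*sa2*td)*e4 + (rc*sa2*td + rd*sa1*tc)*e5 +
      (rc*sa2*ta1 + rc*sb1*tb2)*e6 + (rd*sa1*tb1 + rd*sb2*ta2)*e7 + (rc*sb1*tc +
      rd*sb2*td)*e8 + (rd*sa2*tb2 + rd*sb1*ta1)*e9 + (rc*sa1*td + rd*sa2*tc)*e10 +
      (ra1*sa1*tc + rb1*sb1*tc)*e11 + (ra1*sb1*td + rb1*sa1*td)*e12 + (-
      ra1*ra2*sa1*sa2*tc*td - ra1*ra2*sb1*sb2*tc*td - ra1*rc*sa2*sc*ta1*td -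
      ra1*rc*sb2*sd*tb1*tc - ra1*rd*sa1*sc*ta1*tc - ra1*rd*sb1*sd*tb1*td +
      ra2*rc*sa2*sd*ta1*tc + ra2*rc*sb2*sc*tb1*td - ra2*rd*sa2*sc*ta2*tc -
      ra2*rd*sb2*sd*tb2*td + rb1*rb2*sa1*sa2*tc*td + rb1*rb2*sb1*sb2*tc*td +
      rb1*rc*sa1*sc*tb2*td + rb1*rc*sb1*sd*ta2*tc - rb1*rd*sa1*sd*tb1*td -
      rb1*rd*sb1*sc*ta1*tc + rb2*rc*sa2*sc*tb1*td + rb2*rc*sb2*sd*ta1*tc +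
      rb2*rd*sa1*sc*tb1*tc + rb2*rd*sb1*sd*ta1*td + rc*rc*sa1*sa2*tc*td + rc*rc*sb1*sb2*tc*td
      + rc*rd*sa1*sa1*ta1*ta2 + rc*rd*sa1*sa1*tb1*tb2 - rc*rd*sa1*sa1*td*td -
      rc*rd*sa2*sa2*td*td + rc*rd*sb1*sb1*ta1*ta2 + rc*rd*sb1*sb1*tb1*tb2 -
      rc*rd*sb1*sb1*tc*tc - rc*rd*sb2*sb2*tc*tc - rd*rd*sa1*sa2*tc*td -
      rd*rd*sb1*sb2*tc*td)*h2
  linear_combination this + rc*rd*(ta1*ta2 + tb1*tb2 - tc^2 - td^2)*(sa1*sa2+sa1*sb1+sa1*sb2+sa2*sb1+sa2*sb2+sb1*sb2)*h2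

/-- Characteristic two: the certificate forcing the `R`-weights to have zero sum. -/
theorem ev_two_sumR {K : Type*} [Field K] (h2 : (2 : K) = 0)
    (ra1 ra2 rb1 rb2 rc rd sa1 sa2 sb1 sb2 sc sd ta1 ta2 tb1 tb2 tc td : K)
    (e1 : ra1*sa1*td - rb1*sb1*td - rc*sd*ta1 + rd*sc*ta2 = 0)
    (e2 : ra1*sd*tb1 - rb2*sd*ta1 - rc*sb1*td + rd*sb2*tc = 0)
    (e3 : ra1*sd*tc - ra2*sc*td - rd*sa1*ta1 + rd*sb2*tb2 = 0)
    (e4 : ra1*sb1*tc - rb1*sa1*tc - rc*sc*tb1 + rd*sd*tb2 = 0)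
    (e5 : ra1*sc*ta1 - rb2*sc*tb1 - rc*sa1*tc + rd*sa2*td = 0)
    (e6 : ra1*sc*td - ra2*sd*tc + rd*sa2*ta2 - rd*sb1*tb1 = 0)
    (e7 : rb1*sd*td - rb2*sc*tc - rc*sa1*tb2 + rc*sb2*ta1 = 0)
    (e8 : ra2*sd*tb2 - rb1*sd*ta2 - rc*sb2*td + rd*sb1*tc = 0)
    (e9 : rb1*sc*tc - rb2*sd*td + rc*sa2*tb1 - rc*sb1*ta2 = 0)
    (e10 : ra2*sc*ta2 - rb1*sc*tb2 - rc*sa2*tc + rd*sa1*td = 0)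
    (e11 : ra2*sa2*td - rb2*sb2*td - rc*sd*ta2 + rd*sc*ta1 = 0)
    (e12 : ra2*sb2*tc - rb2*sa2*tc - rc*sc*tb2 + rd*sd*tb1 = 0)
    (lS : sa1+sa2+sb1+sb2 = 0) (lT : ta1+ta2+tb1+tb2 = 0) :
    (tc*td*(sb2*sa1 + sa2*sb1) - sc*sd*(tb2*ta1 + ta2*tb1))*(ra1+ra2+rb1+rb2) = 0 := by
  linear_combination (sb1*tc + sb2*tc)*e1 + (sc*ta1 + sc*ta2)*e2 + (sa1*td + sa2*td)*e4 +
      (sd*ta1 + sd*ta2)*e5 + (sc*ta1 + sc*ta2)*e8 + (sd*tb1 + sd*tb2)*e10 + (sb1*tc +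
      sb2*tc)*e11 + (sb1*td + sb2*td)*e12 + (ra2*sb2*tc*td + rb1*sa1*tc*td + rb1*sb1*tc*td +
      rb2*sb2*tc*td + rc*sc*tb1*td + rc*sd*ta1*tc + rc*sd*ta2*tc + rd*sd*tb1*td)*lS +
      (ra1*sc*sd*ta1 + rb1*sc*sd*ta2 + rb1*sc*sd*tb2 + rb2*sc*sd*ta1 + rc*sa2*sd*tc +
      rc*sb1*sc*td + rc*sb2*sc*td + rd*sa2*sd*td)*lT + (- ra1*sa1*sb1*tc*td -
      ra1*sc*sd*ta1*ta1 - ra1*sc*sd*ta1*ta2 - ra1*sc*sd*ta1*tb1 - ra1*sc*sd*ta1*tb2 -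
      ra1*sc*sd*ta2*tb1 - ra2*sa2*sb2*tc*td - ra2*sb1*sb2*tc*td - ra2*sb2*sb2*tc*td -
      ra2*sc*sd*ta1*tb2 - ra2*sc*sd*ta2*tb1 - ra2*sc*sd*ta2*tb2 - rb1*sa1*sb1*tc*td -
      rb1*sc*sd*ta1*tb2 - rb1*sc*sd*ta2*tb1 - rb1*sc*sd*ta2*tb2 + rb2*sa2*sb1*tc*td -
      rb2*sc*sd*ta1*tb2 - rc*sa2*sd*ta1*tc - rc*sa2*sd*ta2*tc - rc*sb1*sc*tb1*td -
      rc*sb2*sc*tb1*td - rd*sa1*sd*tb1*td - rd*sa1*sd*tb2*td - rd*sa2*sd*ta1*td -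
      rd*sa2*sd*ta2*td - rd*sa2*sd*tb1*td - rd*sa2*sd*tb2*td - rd*sb1*sc*ta1*tc -
      rd*sb1*sc*ta2*tc - rd*sb1*sd*tb1*td - rd*sb2*sc*ta1*tc - rd*sb2*sc*ta2*tc -
      rd*sb2*sd*tb1*td)*h2

/-- Characteristic two: the final certificate. -/
theorem ev_two_final {K : Type*} [Field K] (h2 : (2 : K) = 0)
    (ra1 ra2 rb1 rb2 rc rd sa1 sa2 sb1 sb2 sc sd ta1 ta2 tb1 tb2 tc td : K)
    (e1 : ra1*sa1*td - rb1*sb1*td - rc*sd*ta1 + rd*sc*ta2 = 0)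
    (e2 : ra1*sd*tb1 - rb2*sd*ta1 - rc*sb1*td + rd*sb2*tc = 0)
    (e3 : ra1*sd*tc - ra2*sc*td - rd*sa1*ta1 + rd*sb2*tb2 = 0)
    (e4 : ra1*sb1*tc - rb1*sa1*tc - rc*sc*tb1 + rd*sd*tb2 = 0)
    (e5 : ra1*sc*ta1 - rb2*sc*tb1 - rc*sa1*tc + rd*sa2*td = 0)
    (e6 : ra1*sc*td - ra2*sd*tc + rd*sa2*ta2 - rd*sb1*tb1 = 0)
    (e7 : rb1*sd*td - rb2*sc*tc - rc*sa1*tb2 + rc*sb2*ta1 = 0)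
    (e8 : ra2*sd*tb2 - rb1*sd*ta2 - rc*sb2*td + rd*sb1*tc = 0)
    (e9 : rb1*sc*tc - rb2*sd*td + rc*sa2*tb1 - rc*sb1*ta2 = 0)
    (e10 : ra2*sc*ta2 - rb1*sc*tb2 - rc*sa2*tc + rd*sa1*td = 0)
    (e11 : ra2*sa2*td - rb2*sb2*td - rc*sd*ta2 + rd*sc*ta1 = 0)
    (e12 : ra2*sb2*tc - rb2*sa2*tc - rc*sc*tb2 + rd*sd*tb1 = 0)
    (k1 : rd*(tc*td*(sb2*sa1 + sa2*sb1) - sc*sd*(tb2*ta1 + ta2*tb1)) = rc*(ta1*tb1*(sa1*sa2 + sb1*sb2 - sc^2 - sd^2) - sa1*sb1*(ta1*ta2 + tb1*tb2 - tc^2 - td^2)))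
    (k2 : rd*(tc*td*(sb2*sa1 + sa2*sb1) - sc*sd*(tb2*ta1 + ta2*tb1)) = rc*(ta2*tb2*(sa1*sa2 + sb1*sb2 - sc^2 - sd^2) - sa2*sb2*(ta1*ta2 + tb1*tb2 - tc^2 - td^2)))
    (k3 : rc*(tc*td*(sb2*sa1 + sa2*sb1) - sc*sd*(tb2*ta1 + ta2*tb1)) = rd*(ta2*tb2*(sa1*sa2 + sb1*sb2 - sc^2 - sd^2) - sa1*sb1*(ta1*ta2 + tb1*tb2 - tc^2 - td^2)))
    (k4 : rc*(tc*td*(sb2*sa1 + sa2*sb1) - sc*sd*(tb2*ta1 + ta2*tb1)) = rd*(ta1*tb1*(sa1*sa2 + sb1*sb2 - sc^2 - sd^2) - sa2*sb2*(ta1*ta2 + tb1*tb2 - tc^2 - td^2)))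
    (lS : sa1+sa2+sb1+sb2 = 0) (lT : ta1+ta2+tb1+tb2 = 0) (lR : ra1+ra2+rb1+rb2 = 0) :
    rc*rd*((ta1*tb1-ta2*tb2)*(sa1*sa2 + sb1*sb2 - sc^2 - sd^2)) = 0 := by
  linear_combination (ra2*sa2*tc + rb2*sa2*tc + rc*sc*tb2)*e1 + (ra2*sc*tb2 + rb1*sc*ta2)*e2 +
      (ra2*sc*tc)*e3 + (ra1*sa2*td + rb1*sa2*td + rd*sc*ta1)*e4 + (ra1*sc*tc + rc*sa1*tb1 +
      rc*sa1*tb2 + rc*sb1*ta1 + rc*sb1*ta2)*e6 + (rb2*sc*td)*e7 + (ra1*sc*tb1 +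
      rb2*sc*ta1)*e8 + (rb1*sc*td + rd*sa1*tb1 + rd*sa2*tb2 + rd*sb1*tb1 + rd*sb2*tb2)*e9 +
      (ra1*sb1*tc + ra2*sa1*tc + rb1*sb1*tc + rb2*sb1*tc + rd*sd*tb2)*e11 + (rb2*sa1*td +
      rb2*sb1*td + rc*sd*ta1)*e12 + (ra1*rc*sc*tb1*td + ra2*rc*sd*ta1*tc + rb1*rd*sc*ta2*tc +
      rb1*rd*sc*tb2*tc + rc*rd*sa2*tb1*tb2 + rc*rd*sb1*ta1*tb1)*lS + (ra1*rc*sb1*sc*td +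
      ra2*rc*sa1*sd*tc + rb1*rd*sa1*sc*tc + rb1*rd*sb1*sc*tc + rc*rd*sa1*sa2*tb1 +
      rc*rd*sa1*sb1*tb1 + rc*rd*sa2*sb1*ta2 + rc*rd*sa2*sb1*tb1)*lT + (ra1*sa2*sb1*tc*td +
      ra1*sc*sc*tc*td + ra2*sa1*sa2*tc*td + ra2*sc*sc*tc*td + rb1*sa1*sa2*tc*td +
      rb1*sc*sc*tc*td + rb2*sa1*sa2*tc*td + rb2*sa2*sb1*tc*td + rb2*sb1*sb2*tc*td +
      rb2*sc*sc*tc*td + rc*sb1*sc*tb2*td + rc*sb1*sd*ta2*tc + rd*sa2*sc*ta2*tc +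
      rd*sa2*sd*tb2*td)*lR + (- ra1*ra1*sa2*sb1*tc*td - ra1*ra1*sc*sc*tc*td -
      ra1*ra2*sa1*sa2*tc*td - ra1*ra2*sa2*sb1*tc*td - ra1*ra2*sc*sc*tc*td -
      ra1*ra2*sc*sd*tb1*tb2 - ra1*rb1*sa2*sb1*tc*td - ra1*rb1*sc*sc*tc*td -
      ra1*rb2*sa1*sa2*tc*td - ra1*rb2*sa2*sb1*tc*td - ra1*rb2*sc*sc*tc*td -
      ra1*rc*sa1*sc*tb1*td - ra1*rc*sa1*sc*tb2*td - ra1*rc*sb1*sc*ta1*td -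
      ra1*rc*sb1*sc*ta2*td - ra1*rc*sb1*sc*tb1*td - ra1*rc*sb1*sc*tb2*td -
      ra1*rd*sa2*sc*ta2*tc - ra1*rd*sa2*sd*tb2*td - ra1*rd*sb1*sc*ta1*tc -
      ra2*ra2*sa1*sa2*tc*td - ra2*rb1*sa1*sa2*tc*td - ra2*rb1*sc*sc*tc*td -
      ra2*rb2*sa1*sa2*tc*td - ra2*rb2*sa2*sb1*tc*td - ra2*rb2*sb1*sb2*tc*td -
      ra2*rb2*sc*sc*tc*td - ra2*rc*sa1*sd*ta1*tc - ra2*rc*sb2*sd*ta1*tc -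
      ra2*rd*sa2*sc*ta2*tc - ra2*rd*sa2*sd*tb2*td - ra2*rd*sb2*sc*tb2*tc -
      rb1*rb1*sc*sc*tc*td - rb1*rb2*sa1*sa2*tc*td - rb1*rb2*sc*sc*tc*td +
      rb1*rb2*sc*sd*ta1*ta2 + rb1*rc*sb1*sc*ta2*td - rb1*rd*sa1*sc*ta2*tc -
      rb1*rd*sa1*sc*tb1*tc - rb1*rd*sa1*sc*tb2*tc - rb1*rd*sa2*sc*ta2*tc -
      rb1*rd*sa2*sc*tb2*tc - rb1*rd*sa2*sd*tb2*td - rb1*rd*sb1*sc*ta1*tc -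
      rb1*rd*sb1*sc*ta2*tc - rb1*rd*sb1*sc*tb1*tc - rb1*rd*sb1*sc*tb2*tc -
      rb1*rd*sb2*sc*ta2*tc - rb1*rd*sb2*sc*tb2*tc + rb2*rc*sa1*sc*tb2*td +
      rb2*rc*sa2*sd*ta1*tc - rb2*rd*sa2*sc*ta2*tc - rb2*rd*sb1*sc*ta1*tc +
      rb2*rd*sb2*sd*tb2*td + rc*rc*sc*sd*ta1*tb2 - rc*rd*sa1*sa2*ta2*tb1 -
      rc*rd*sa1*sa2*ta2*tb2 - rc*rd*sa1*sa2*tb1*tb1 - rc*rd*sa1*sa2*tb1*tb2 -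
      rc*rd*sa1*sb1*ta1*tb1 - rc*rd*sa2*sa2*tb1*tb2 - rc*rd*sa2*sb1*ta1*ta2 -
      rc*rd*sa2*sb1*ta1*tb1 - rc*rd*sa2*sb1*ta2*ta2 - rc*rd*sa2*sb1*ta2*tb1 -
      rc*rd*sa2*sb1*tb1*tb1 - rc*rd*sa2*sb1*tb1*tb2 - rc*rd*sa2*sb2*tb1*tb2 +
      rc*rd*sb1*sb1*ta2*tb1 - rc*rd*sd*sd*ta1*tb1 + rc*rd*sd*sd*ta2*tb2 -
      rd*rd*sc*sd*ta1*tb2)*h2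

/-- The four key identities. -/
theorem ev_key {K : Type*} [Field K]
    (ra1 ra2 rb1 rb2 rc rd sa1 sa2 sb1 sb2 sc sd ta1 ta2 tb1 tb2 tc td : K)
    (e1 : ra1*sa1*td - rb1*sb1*td - rc*sd*ta1 + rd*sc*ta2 = 0)
    (e2 : ra1*sd*tb1 - rb2*sd*ta1 - rc*sb1*td + rd*sb2*tc = 0)
    (e3 : ra1*sd*tc - ra2*sc*td - rd*sa1*ta1 + rd*sb2*tb2 = 0)
    (e4 : ra1*sb1*tc - rb1*sa1*tc - rc*sc*tb1 + rd*sd*tb2 = 0)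
    (e5 : ra1*sc*ta1 - rb2*sc*tb1 - rc*sa1*tc + rd*sa2*td = 0)
    (e6 : ra1*sc*td - ra2*sd*tc + rd*sa2*ta2 - rd*sb1*tb1 = 0)
    (e7 : rb1*sd*td - rb2*sc*tc - rc*sa1*tb2 + rc*sb2*ta1 = 0)
    (e8 : ra2*sd*tb2 - rb1*sd*ta2 - rc*sb2*td + rd*sb1*tc = 0)
    (e9 : rb1*sc*tc - rb2*sd*td + rc*sa2*tb1 - rc*sb1*ta2 = 0)
    (e10 : ra2*sc*ta2 - rb1*sc*tb2 - rc*sa2*tc + rd*sa1*td = 0)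
    (e11 : ra2*sa2*td - rb2*sb2*td - rc*sd*ta2 + rd*sc*ta1 = 0)
    (e12 : ra2*sb2*tc - rb2*sa2*tc - rc*sc*tb2 + rd*sd*tb1 = 0) :
    (rd*(tc*td*(sb2*sa1 + sa2*sb1) - sc*sd*(tb2*ta1 + ta2*tb1)) = rc*(ta1*tb1*(sa1*sa2 + sb1*sb2 - sc^2 - sd^2) - sa1*sb1*(ta1*ta2 + tb1*tb2 - tc^2 - td^2))) ∧
    (rd*(tc*td*(sb2*sa1 + sa2*sb1) - sc*sd*(tb2*ta1 + ta2*tb1)) = rc*(ta2*tb2*(sa1*sa2 + sb1*sb2 - sc^2 - sd^2) - sa2*sb2*(ta1*ta2 + tb1*tb2 - tc^2 - td^2))) ∧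
    (rc*(tc*td*(sb2*sa1 + sa2*sb1) - sc*sd*(tb2*ta1 + ta2*tb1)) = rd*(ta2*tb2*(sa1*sa2 + sb1*sb2 - sc^2 - sd^2) - sa1*sb1*(ta1*ta2 + tb1*tb2 - tc^2 - td^2))) ∧
    (rc*(tc*td*(sb2*sa1 + sa2*sb1) - sc*sd*(tb2*ta1 + ta2*tb1)) = rd*(ta1*tb1*(sa1*sa2 + sb1*sb2 - sc^2 - sd^2) - sa2*sb2*(ta1*ta2 + tb1*tb2 - tc^2 - td^2))) := by
  refine ⟨?_, ?_, ?_, ?_⟩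
  · linear_combination (-1)*(sd*tb1)*e1 + (1)*(sa1*td)*e2 + (-1)*(sc*ta1)*e4 + (1)*(sb1*tc)*e5 + (-1)*(sb1*tb1)*e7 + (-1)*(sa1*ta1)*e9
  · linear_combination (-1)*(sd*tb2)*e11 + (1)*(sa2*td)*e8 + (-1)*(sc*ta2)*e12 + (1)*(sb2*tc)*e10 + (1)*(sb2*tb2)*e9 + (1)*(sa2*ta2)*e7
  · linear_combination (1)*(sc*tb2)*e1 + (-1)*(sb1*td)*e10 + (1)*(sd*ta2)*e4 + (-1)*(sa1*tc)*e8 + (-1)*(sa1*tb2)*e6 + (-1)*(sb1*ta2)*e3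
  · linear_combination (1)*(sc*tb1)*e11 + (-1)*(sb2*td)*e5 + (1)*(sd*ta1)*e12 + (-1)*(sa2*tc)*e2 + (1)*(sa2*tb1)*e3 + (1)*(sb2*ta1)*e6

/-- The theorem in the normalised gauge. -/
theorem ev_norm {K : Type*} [Field K]
    (ra1 ra2 rb1 rb2 rc rd sa1 sa2 sb1 sb2 sc sd ta1 ta2 tb1 tb2 tc td : K) (hc : rc ≠ 0) (hd : rd ≠ 0)
    (e1 : ra1*sa1*td - rb1*sb1*td - rc*sd*ta1 + rd*sc*ta2 = 0)
    (e2 : ra1*sd*tb1 - rb2*sd*ta1 - rc*sb1*td + rd*sb2*tc = 0)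
    (e3 : ra1*sd*tc - ra2*sc*td - rd*sa1*ta1 + rd*sb2*tb2 = 0)
    (e4 : ra1*sb1*tc - rb1*sa1*tc - rc*sc*tb1 + rd*sd*tb2 = 0)
    (e5 : ra1*sc*ta1 - rb2*sc*tb1 - rc*sa1*tc + rd*sa2*td = 0)
    (e6 : ra1*sc*td - ra2*sd*tc + rd*sa2*ta2 - rd*sb1*tb1 = 0)
    (e7 : rb1*sd*td - rb2*sc*tc - rc*sa1*tb2 + rc*sb2*ta1 = 0)
    (e8 : ra2*sd*tb2 - rb1*sd*ta2 - rc*sb2*td + rd*sb1*tc = 0)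
    (e9 : rb1*sc*tc - rb2*sd*td + rc*sa2*tb1 - rc*sb1*ta2 = 0)
    (e10 : ra2*sc*ta2 - rb1*sc*tb2 - rc*sa2*tc + rd*sa1*td = 0)
    (e11 : ra2*sa2*td - rb2*sb2*td - rc*sd*ta2 + rd*sc*ta1 = 0)
    (e12 : ra2*sb2*tc - rb2*sa2*tc - rc*sc*tb2 + rd*sd*tb1 = 0) :
    (ta1*tb1-ta2*tb2)*(sa1*sa2 + sb1*sb2 - sc^2 - sd^2) = 0 ∧ (sa1*sb1-sa2*sb2)*(ta1*ta2 + tb1*tb2 - tc^2 - td^2) = 0 ∧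
    (tc*td*(sb2*sa1 + sa2*sb1) - sc*sd*(tb2*ta1 + ta2*tb1))^2 = (ta1*tb1*(sa1*sa2 + sb1*sb2 - sc^2 - sd^2) - sa1*sb1*(ta1*ta2 + tb1*tb2 - tc^2 - td^2))^2 := by
  obtain ⟨k1, k2, k3, k4⟩ := ev_key ra1 ra2 rb1 rb2 rc rd sa1 sa2 sb1 sb2 sc sd ta1 ta2 tb1 tb2 tc td e1 e2 e3 e4 e5 e6 e7 e8 e9 e10 e11 e12
  have hXY : (ta1*tb1-ta2*tb2)*(sa1*sa2 + sb1*sb2 - sc^2 - sd^2) = (sa1*sb1-sa2*sb2)*(ta1*ta2 + tb1*tb2 - tc^2 - td^2) := by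
    apply mul_left_cancel₀ hc
    linear_combination k2 - k1
  have hXY' : (ta1*tb1-ta2*tb2)*(sa1*sa2 + sb1*sb2 - sc^2 - sd^2) = -((sa1*sb1-sa2*sb2)*(ta1*ta2 + tb1*tb2 - tc^2 - td^2)) := by
    apply mul_left_cancel₀ hd
    linear_combination k3 - k4
  have h2X : (2:K) * ((ta1*tb1-ta2*tb2)*(sa1*sa2 + sb1*sb2 - sc^2 - sd^2)) = 0 := by
    linear_combination hXY + hXY'
  have hX : (ta1*tb1-ta2*tb2)*(sa1*sa2 + sb1*sb2 - sc^2 - sd^2) = 0 := by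
    rcases mul_eq_zero.1 h2X with h2 | h
    swap
    · exact h
    by_contra hne
    have hFS : (sa1*sa2 + sb1*sb2 - sc^2 - sd^2) ≠ 0 := right_ne_zero_of_mul hne
    have hFT : (ta1*ta2 + tb1*tb2 - tc^2 - td^2) ≠ 0 := by
      intro h0
      rw [h0, mul_zero] at hXY
      exact hne hXY
    have lT : ta1+ta2+tb1+tb2 = 0 := by
      have := ev_two_sqT h2 ra1 ra2 rb1 rb2 rc rd sa1 sa2 sb1 sb2 sc sd ta1 ta2 tb1 tb2 tc td e1 e2 e3 e4 e5 e6 e7 e8 e9 e10 e11 e12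
      simpa [hc, hd, hFS] using this
    have lS : sa1+sa2+sb1+sb2 = 0 := by
      have := ev_two_sqS h2 ra1 ra2 rb1 rb2 rc rd sa1 sa2 sb1 sb2 sc sd ta1 ta2 tb1 tb2 tc td e1 e2 e3 e4 e5 e6 e7 e8 e9 e10 e11 e12
      simpa [hc, hd, hFT] using this
    have lR : ra1+ra2+rb1+rb2 = 0 := by
      rcases mul_eq_zero.1 (ev_two_sumR h2 ra1 ra2 rb1 rb2 rc rd sa1 sa2 sb1 sb2 sc sd ta1 ta2 tb1 tb2 tc td e1 e2 e3 e4 e5 e6 e7 e8 e9 e10 e11 e12 lS lT) with h | h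
      · exfalso
        apply hne
        rw [h, mul_zero] at k1 k3
        have h1 := (mul_eq_zero.1 k1.symm).resolve_left hc
        have h3 := (mul_eq_zero.1 k3.symm).resolve_left hd
        linear_combination h1 - h3
      · exact h
    have := ev_two_final h2 ra1 ra2 rb1 rb2 rc rd sa1 sa2 sb1 sb2 sc sd ta1 ta2 tb1 tb2 tc td e1 e2 e3 e4 e5 e6 e7 e8 e9 e10 e11 e12 k1 k2 k3 k4 lS lT lR
    exact hne ((mul_eq_zero.1 this).resolve_left (mul_ne_zero hc hd))
  refine ⟨hX, hXY ▸ hX, ?_⟩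
  apply mul_left_cancel₀ (mul_ne_zero hc hd)
  have k3' : rc*(tc*td*(sb2*sa1 + sa2*sb1) - sc*sd*(tb2*ta1 + ta2*tb1)) = rd*(ta1*tb1*(sa1*sa2 + sb1*sb2 - sc^2 - sd^2) - sa1*sb1*(ta1*ta2 + tb1*tb2 - tc^2 - td^2)) := by
    linear_combination k3 - rd*hX
  linear_combination (rd*(tc*td*(sb2*sa1 + sa2*sb1) - sc*sd*(tb2*ta1 + ta2*tb1)))*k3' + rd*(ta1*tb1*(sa1*sa2 + sb1*sb2 - sc^2 - sd^2) - sa1*sb1*(ta1*ta2 + tb1*tb2 - tc^2 - td^2))*k1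

end NormalisedGauge

section Gauge

/-- Gauge fixing over an algebraically closed field. -/
theorem ev_gauge {K : Type*} [Field K] [IsAlgClosed K]
    (ra1 ra2 rb1 rb2 rc1 rc2 rd1 rd2 sa1 sa2 sb1 sb2 sc1 sc2 sd1 sd2 ta1 ta2 tb1 tb2 tc1 tc2 td1 td2 : K)
    (hrc1 : rc1 ≠ 0) (hrc2 : rc2 ≠ 0) (hrd1 : rd1 ≠ 0) (hrd2 : rd2 ≠ 0) (hsc1 : sc1 ≠ 0) (hsc2 : sc2 ≠ 0) (hsd1 : sd1 ≠ 0) (hsd2 : sd2 ≠ 0) (htc1 : tc1 ≠ 0) (htc2 : tc2 ≠ 0) (htd1 : td1 ≠ 0) (htd2 : td2 ≠ 0)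
    (d1 : rd1*sc2*td2 = rd2*sc1*td1)
    (d2 : rd1*sd2*tc2 = rd2*sd1*tc1)
    (d3 : rc1*sc2*tc1 = rc2*sc1*tc2)
    (d4 : rc1*sd2*td1 = rc2*sd1*td2)
    (u1 : ra1*sa1*td1 - rb1*sb1*td1 - rc2*sd1*ta1 + rd1*sc2*ta2 = 0)
    (u2 : ra1*sd1*tb1 - rb2*sd1*ta1 - rc1*sb1*td1 + rd1*sb2*tc2 = 0)
    (u3 : ra1*sd1*tc1 - ra2*sc1*td1 - rd1*sa1*ta1 + rd1*sb2*tb2 = 0)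
    (u4 : ra1*sb1*tc1 - rb1*sa1*tc1 - rc2*sc1*tb1 + rd1*sd2*tb2 = 0)
    (u5 : ra1*sc1*ta1 - rb2*sc1*tb1 - rc1*sa1*tc1 + rd1*sa2*td2 = 0)
    (u6 : ra1*sc1*td1 - ra2*sd1*tc1 + rd1*sa2*ta2 - rd1*sb1*tb1 = 0)
    (u7 : rb1*sd1*td2 - rb2*sc1*tc2 - rc1*sa1*tb2 + rc1*sb2*ta1 = 0)
    (u8 : -ra2*sd1*tb2 + rb1*sd1*ta2 + rc1*sb2*td1 - rd1*sb1*tc2 = 0)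
    (u9 : rb1*sc1*tc2 - rb2*sd1*td2 + rc1*sa2*tb1 - rc1*sb1*ta2 = 0)
    (u10 : -ra2*sc1*ta2 + rb1*sc1*tb2 + rc1*sa2*tc1 - rd1*sa1*td2 = 0)
    (u11 : -ra2*sa2*td1 + rb2*sb2*td1 + rc2*sd1*ta2 - rd1*sc2*ta1 = 0)
    (u12 : -ra2*sb2*tc1 + rb2*sa2*tc1 + rc2*sc1*tb2 - rd1*sd2*tb1 = 0) :
    ta1*tb1*(sa1*sa2 + sb1*sb2 - sc1*sc2 - sd1*sd2) = ta2*tb2*(sa1*sa2 + sb1*sb2 - sc1*sc2 - sd1*sd2) ∧ sa1*sb1*(ta1*ta2 + tb1*tb2 - tc1*tc2 - td1*td2) = sa2*sb2*(ta1*ta2 + tb1*tb2 - tc1*tc2 - td1*td2) ∧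
    tc1*td2*(tc2*td1*(sb2*sa1 + sa2*sb1) - sc2*sd1*(tb2*ta1 + ta2*tb1))^2 =
      tc2*td1*(ta1*tb1*(sa1*sa2 + sb1*sb2 - sc1*sc2 - sd1*sd2) - sa1*sb1*(ta1*ta2 + tb1*tb2 - tc1*tc2 - td1*td2))^2 ∧
    tc2*td1*(tc1*td2*(sb2*sa1 + sa2*sb1) - sc1*sd2*(tb2*ta1 + ta2*tb1))^2 =
      tc1*td2*(ta1*tb1*(sa1*sa2 + sb1*sb2 - sc1*sc2 - sd1*sd2) - sa1*sb1*(ta1*ta2 + tb1*tb2 - tc1*tc2 - td1*td2))^2 := by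
  obtain ⟨p, hp2⟩ := IsAlgClosed.exists_pow_nat_eq (sc1/sc2) (n := 2) (by norm_num)
  obtain ⟨Q, hQ2⟩ := IsAlgClosed.exists_pow_nat_eq (tc1/tc2) (n := 2) (by norm_num)
  obtain ⟨k, hk2⟩ := IsAlgClosed.exists_pow_nat_eq (sd1*sc2/(sd2*sc1)) (n := 2) (by norm_num)
  have hp : p ≠ 0 := by
    rintro rfl
    rw [eq_div_iff hsc2] at hp2
    exact hsc1 (by linear_combination -hp2)
  have hQ : Q ≠ 0 := by
    rintro rfl
    rw [eq_div_iff htc2] at hQ2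
    exact htc1 (by linear_combination -hQ2)
  have hk : k ≠ 0 := by
    rintro rfl
    rw [eq_div_iff (mul_ne_zero hsd2 hsc1)] at hk2
    exact mul_ne_zero hsd1 hsc2 (by linear_combination -hk2)
  rw [eq_div_iff hsc2] at hp2
  rw [eq_div_iff htc2] at hQ2
  rw [eq_div_iff (mul_ne_zero hsd2 hsc1)] at hk2
  have E1 : sd1 = p^2*k^2*sd2 := by
    apply mul_right_cancel₀ hsc2
    linear_combination -hk2 - k^2*sd2*hp2
  obtain ⟨z, hz⟩ : ∃ z, rc2 = Q^2*z := ⟨rc2/Q^2, by field_simp⟩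
  subst hp2 hQ2 E1 hz
  have E2 : rc1 = p^2*z := by
    apply mul_right_cancel₀ (mul_ne_zero (mul_ne_zero hsc2 htc2) (pow_ne_zero 2 hQ))
    linear_combination d3
  have E3 : rd1 = rd2*p^2*k^2*Q^2 := by
    apply mul_right_cancel₀ (mul_ne_zero hsd2 htc2)
    linear_combination d2
  subst E2 E3
  have E4 : td1 = k^2*Q^2*td2 := by
    apply mul_right_cancel₀ (mul_ne_zero (mul_ne_zero hrd2 hsc2) (pow_ne_zero 2 hp))
    linear_combination -d1
  subst E4
  have hz : z ≠ 0 := right_ne_zero_of_mul hrc2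
  obtain ⟨n1, n2, n3⟩ := ev_norm ra1 ra2 rb1 rb2 (p*Q*z) (p*Q*k*rd2) sa1 sa2 sb1 sb2
    (p*sc2) (p*k*sd2) ta1 ta2 tb1 tb2 (Q*tc2) (Q*k*td2)
    (mul_ne_zero (mul_ne_zero hp hQ) hz)
    (mul_ne_zero (mul_ne_zero (mul_ne_zero hp hQ) hk) hrd2)
    (by apply mul_left_cancel₀ (mul_ne_zero hQ hk); linear_combination u1)
    (by apply mul_left_cancel₀ (mul_ne_zero hp hk); linear_combination u2)
    (by apply mul_left_cancel₀ (mul_ne_zero (mul_ne_zero hp hQ) hk); linear_combination u3)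
    (by apply mul_left_cancel₀ hQ; linear_combination u4)
    (by apply mul_left_cancel₀ hp; linear_combination u5)
    (by apply mul_left_cancel₀ (mul_ne_zero (mul_ne_zero hp hQ) hk); linear_combination u6)
    (by apply mul_left_cancel₀ hp; linear_combination Q*u7)
    (by apply mul_left_cancel₀ (mul_ne_zero hp hk); linear_combination -u8)
    (by apply mul_left_cancel₀ hp; linear_combination Q*u9)
    (by apply mul_left_cancel₀ hp; linear_combination -u10)
    (by apply mul_left_cancel₀ (mul_ne_zero hQ hk); linear_combination -u11)
    (by apply mul_left_cancel₀ hQ; linear_combination -u12)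
  refine ⟨?_, ?_, ?_, ?_⟩
  · linear_combination n1
  · linear_combination n2
  · linear_combination (Q^2*tc2*td2*k^2)*n3
  · linear_combination (Q^2*tc2*td2)*n3

/-- The scalar statement over an arbitrary field. -/
theorem ev_scalar {F : Type*} [Field F]
    (ra1 ra2 rb1 rb2 rc1 rc2 rd1 rd2 sa1 sa2 sb1 sb2 sc1 sc2 sd1 sd2 ta1 ta2 tb1 tb2 tc1 tc2 td1 td2 : F)
    (hrc1 : rc1 ≠ 0) (hrc2 : rc2 ≠ 0) (hrd1 : rd1 ≠ 0) (hrd2 : rd2 ≠ 0) (hsc1 : sc1 ≠ 0) (hsc2 : sc2 ≠ 0) (hsd1 : sd1 ≠ 0) (hsd2 : sd2 ≠ 0) (htc1 : tc1 ≠ 0) (htc2 : tc2 ≠ 0) (htd1 : td1 ≠ 0) (htd2 : td2 ≠ 0)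
    (d1 : rd1*sc2*td2 = rd2*sc1*td1)
    (d2 : rd1*sd2*tc2 = rd2*sd1*tc1)
    (d3 : rc1*sc2*tc1 = rc2*sc1*tc2)
    (d4 : rc1*sd2*td1 = rc2*sd1*td2)
    (u1 : ra1*sa1*td1 - rb1*sb1*td1 - rc2*sd1*ta1 + rd1*sc2*ta2 = 0)
    (u2 : ra1*sd1*tb1 - rb2*sd1*ta1 - rc1*sb1*td1 + rd1*sb2*tc2 = 0)
    (u3 : ra1*sd1*tc1 - ra2*sc1*td1 - rd1*sa1*ta1 + rd1*sb2*tb2 = 0)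
    (u4 : ra1*sb1*tc1 - rb1*sa1*tc1 - rc2*sc1*tb1 + rd1*sd2*tb2 = 0)
    (u5 : ra1*sc1*ta1 - rb2*sc1*tb1 - rc1*sa1*tc1 + rd1*sa2*td2 = 0)
    (u6 : ra1*sc1*td1 - ra2*sd1*tc1 + rd1*sa2*ta2 - rd1*sb1*tb1 = 0)
    (u7 : rb1*sd1*td2 - rb2*sc1*tc2 - rc1*sa1*tb2 + rc1*sb2*ta1 = 0)
    (u8 : -ra2*sd1*tb2 + rb1*sd1*ta2 + rc1*sb2*td1 - rd1*sb1*tc2 = 0)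
    (u9 : rb1*sc1*tc2 - rb2*sd1*td2 + rc1*sa2*tb1 - rc1*sb1*ta2 = 0)
    (u10 : -ra2*sc1*ta2 + rb1*sc1*tb2 + rc1*sa2*tc1 - rd1*sa1*td2 = 0)
    (u11 : -ra2*sa2*td1 + rb2*sb2*td1 + rc2*sd1*ta2 - rd1*sc2*ta1 = 0)
    (u12 : -ra2*sb2*tc1 + rb2*sa2*tc1 + rc2*sc1*tb2 - rd1*sd2*tb1 = 0) :
    ta1*tb1*(sa1*sa2 + sb1*sb2 - sc1*sc2 - sd1*sd2) = ta2*tb2*(sa1*sa2 + sb1*sb2 - sc1*sc2 - sd1*sd2) ∧ sa1*sb1*(ta1*ta2 + tb1*tb2 - tc1*tc2 - td1*td2) = sa2*sb2*(ta1*ta2 + tb1*tb2 - tc1*tc2 - td1*td2) ∧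
    tc1*td2*(tc2*td1*(sb2*sa1 + sa2*sb1) - sc2*sd1*(tb2*ta1 + ta2*tb1))^2 =
      tc2*td1*(ta1*tb1*(sa1*sa2 + sb1*sb2 - sc1*sc2 - sd1*sd2) - sa1*sb1*(ta1*ta2 + tb1*tb2 - tc1*tc2 - td1*td2))^2 ∧
    tc2*td1*(tc1*td2*(sb2*sa1 + sa2*sb1) - sc1*sd2*(tb2*ta1 + ta2*tb1))^2 =
      tc1*td2*(ta1*tb1*(sa1*sa2 + sb1*sb2 - sc1*sc2 - sd1*sd2) - sa1*sb1*(ta1*ta2 + tb1*tb2 - tc1*tc2 - td1*td2))^2 := by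
  have hinj := (algebraMap F (AlgebraicClosure F)).injective
  have hn : ∀ x : F, x ≠ 0 → algebraMap F (AlgebraicClosure F) x ≠ 0 := fun x hx =>
    (map_ne_zero _).2 hx
  generalize algebraMap F (AlgebraicClosure F) = f at hinj hn
  have key := ev_gauge (f ra1) (f ra2) (f rb1) (f rb2) (f rc1) (f rc2) (f rd1) (f rd2) (f sa1) (f sa2) (f sb1) (f sb2) (f sc1) (f sc2) (f sd1) (f sd2) (f ta1) (f ta2) (f tb1) (f tb2) (f tc1) (f tc2) (f td1) (f td2)
    (hn _ hrc1) (hn _ hrc2) (hn _ hrd1) (hn _ hrd2) (hn _ hsc1) (hn _ hsc2) (hn _ hsd1) (hn _ hsd2) (hn _ htc1) (hn _ htc2) (hn _ htd1) (hn _ htd2)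
    (by have := congrArg f d1; simpa only [map_add, map_sub, map_mul, map_neg, map_zero] using this)
    (by have := congrArg f d2; simpa only [map_add, map_sub, map_mul, map_neg, map_zero] using this)
    (by have := congrArg f d3; simpa only [map_add, map_sub, map_mul, map_neg, map_zero] using this)
    (by have := congrArg f d4; simpa only [map_add, map_sub, map_mul, map_neg, map_zero] using this)
    (by have := congrArg f u1; simpa only [map_add, map_sub, map_mul, map_neg, map_zero] using this)
    (by have := congrArg f u2; simpa only [map_add, map_sub, map_mul, map_neg, map_zero] using this)
    (by have := congrArg f u3; simpa only [map_add, map_sub, map_mul, map_neg, map_zero] using this)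
    (by have := congrArg f u4; simpa only [map_add, map_sub, map_mul, map_neg, map_zero] using this)
    (by have := congrArg f u5; simpa only [map_add, map_sub, map_mul, map_neg, map_zero] using this)
    (by have := congrArg f u6; simpa only [map_add, map_sub, map_mul, map_neg, map_zero] using this)
    (by have := congrArg f u7; simpa only [map_add, map_sub, map_mul, map_neg, map_zero] using this)
    (by have := congrArg f u8; simpa only [map_add, map_sub, map_mul, map_neg, map_zero] using this)
    (by have := congrArg f u9; simpa only [map_add, map_sub, map_mul, map_neg, map_zero] using this)
    (by have := congrArg f u10; simpa only [map_add, map_sub, map_mul, map_neg, map_zero] using this)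
    (by have := congrArg f u11; simpa only [map_add, map_sub, map_mul, map_neg, map_zero] using this)
    (by have := congrArg f u12; simpa only [map_add, map_sub, map_mul, map_neg, map_zero] using this)
  simp only [← map_add, ← map_sub, ← map_mul, ← map_pow] at key
  exact ⟨hinj key.1, hinj key.2.1, hinj key.2.2.1, hinj key.2.2.2⟩

end Gauge

/-- Necessary conditions on S and T (with all sixteen weights nonzero) for the existence
of an eight-vertex matrix R with nonzero c- and d-weights satisfying [[R,S,T]] = 0. -/
theorem stmt_19 (F : Type*) [Field F]
    (S T : Matrix (Fin 2 × Fin 2) (Fin 2 × Fin 2) F)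
    (hS : EightVertex S) (hT : EightVertex T)
    (hSnz : ∀ i : ℤ, i = 1 ∨ i = -1 →
      wa S i ≠ 0 ∧ wb S i ≠ 0 ∧ wc S i ≠ 0 ∧ wd S i ≠ 0)
    (hTnz : ∀ i : ℤ, i = 1 ∨ i = -1 →
      wa T i ≠ 0 ∧ wb T i ≠ 0 ∧ wc T i ≠ 0 ∧ wd T i ≠ 0)
    (hex : ∃ R : Matrix (Fin 2 × Fin 2) (Fin 2 × Fin 2) F, EightVertex R ∧
      wc R 1 ≠ 0 ∧ wc R (-1) ≠ 0 ∧ wd R 1 ≠ 0 ∧ wd R (-1) ≠ 0 ∧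
      op12 R * op13 S * op23 T = op23 T * op13 S * op12 R) :
    (wa T 1 * wb T 1 * Fwt S = wa T (-1) * wb T (-1) * Fwt S) ∧
    (wa S 1 * wb S 1 * Fwt T = wa S (-1) * wb S (-1) * Fwt T) ∧
    (∀ i : ℤ, i = 1 ∨ i = -1 →
      wc T i * wd T (-i) * (Gwt i S T) ^ 2 =
        wc T (-i) * wd T i *
          (wa T 1 * wb T 1 * Fwt S - wa S 1 * wb S 1 * Fwt T) ^ 2) ∧
    (wc T 1 * wc S (-1) * (wd T (-1) * wd S 1) =
      wd T 1 * wd S (-1) * (wc T (-1) * wc S 1)) := by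
  obtain ⟨R, hR, hrc1, hrc2, hrd1, hrd2, hyb⟩ := hex
  obtain ⟨-, -, hsc1, hsd1⟩ := hSnz 1 (Or.inl rfl)
  obtain ⟨-, -, hsc2, hsd2⟩ := hSnz (-1) (Or.inr rfl)
  obtain ⟨-, -, htc1, htd1⟩ := hTnz 1 (Or.inl rfl)
  obtain ⟨-, -, htc2, htd2⟩ := hTnz (-1) (Or.inr rfl)
  simp only [EightVertex, Fin.forall_fin_two] at hR hS hT
  norm_num at hR hS hT
  have hent : ∀ p q, (op12 R * op13 S * op23 T) p q - (op23 T * op13 S * op12 R) p q = 0 := by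
    intro p q
    rw [hyb, sub_self]
  simp only [Matrix.mul_apply, op12, op13, op23, Matrix.of_apply, Fintype.sum_prod_type,
    Fin.sum_univ_two] at hent
  have m11 : ((-1 : ℤ) = 1) = False := by norm_num
  simp only [wa, wb, wc, wd, Fwt, Gwt, m11, if_true, if_false, neg_neg] at *
  have d1 : R (0,0) (1,1)*S (1,0) (0,1)*T (1,1) (0,0) = R (1,1) (0,0)*S (0,1) (1,0)*T (0,0) (1,1) := by
    have h := hent (0, 0, 0) (0, 0, 0)
    simp [hR, hS, hT] at h
    linear_combination h
  have d2 : R (0,0) (1,1)*S (1,1) (0,0)*T (1,0) (0,1) = R (1,1) (0,0)*S (0,0) (1,1)*T (0,1) (1,0) := by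
    have h := hent (0, 0, 1) (0, 0, 1)
    simp [hR, hS, hT] at h
    linear_combination h
  have d3 : R (0,1) (1,0)*S (1,0) (0,1)*T (0,1) (1,0) = R (1,0) (0,1)*S (0,1) (1,0)*T (1,0) (0,1) := by
    have h := hent (0, 1, 0) (0, 1, 0)
    simp [hR, hS, hT] at h
    linear_combination h
  have d4 : R (0,1) (1,0)*S (1,1) (0,0)*T (0,0) (1,1) = R (1,0) (0,1)*S (0,0) (1,1)*T (1,1) (0,0) := by
    have h := hent (0, 1, 1) (0, 1, 1)
    simp [hR, hS, hT] at h
    linear_combination h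
  have u1 : R (0,0) (0,0)*S (0,0) (0,0)*T (0,0) (1,1) - R (0,1) (0,1)*S (0,1) (0,1)*T (0,0) (1,1) - R (1,0) (0,1)*S (0,0) (1,1)*T (0,0) (0,0) + R (0,0) (1,1)*S (1,0) (0,1)*T (1,1) (1,1) = 0 := by
    have h := hent (0, 0, 0) (0, 1, 1)
    simp [hR, hS, hT] at h
    linear_combination h
  have u2 : R (0,0) (0,0)*S (0,0) (1,1)*T (0,1) (0,1) - R (1,0) (1,0)*S (0,0) (1,1)*T (0,0) (0,0) - R (0,1) (1,0)*S (0,1) (0,1)*T (0,0) (1,1) + R (0,0) (1,1)*S (1,0) (1,0)*T (1,0) (0,1) = 0 := by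
    have h := hent (0, 0, 0) (1, 0, 1)
    simp [hR, hS, hT] at h
    linear_combination h
  have u3 : R (0,0) (0,0)*S (0,0) (1,1)*T (0,1) (1,0) - R (1,1) (1,1)*S (0,1) (1,0)*T (0,0) (1,1) - R (0,0) (1,1)*S (0,0) (0,0)*T (0,0) (0,0) + R (0,0) (1,1)*S (1,0) (1,0)*T (1,0) (1,0) = 0 := by
    have h := hent (0, 0, 0) (1, 1, 0)
    simp [hR, hS, hT] at h
    linear_combination h
  have u4 : R (0,0) (0,0)*S (0,1) (0,1)*T (0,1) (1,0) - R (0,1) (0,1)*S (0,0) (0,0)*T (0,1) (1,0) - R (1,0) (0,1)*S (0,1) (1,0)*T (0,1) (0,1) + R (0,0) (1,1)*S (1,1) (0,0)*T (1,0) (1,0) = 0 := by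
    have h := hent (0, 0, 1) (0, 1, 0)
    simp [hR, hS, hT] at h
    linear_combination h
  have u5 : R (0,0) (0,0)*S (0,1) (1,0)*T (0,0) (0,0) - R (1,0) (1,0)*S (0,1) (1,0)*T (0,1) (0,1) - R (0,1) (1,0)*S (0,0) (0,0)*T (0,1) (1,0) + R (0,0) (1,1)*S (1,1) (1,1)*T (1,1) (0,0) = 0 := by
    have h := hent (0, 0, 1) (1, 0, 0)
    simp [hR, hS, hT] at h
    linear_combination h
  have u6 : R (0,0) (0,0)*S (0,1) (1,0)*T (0,0) (1,1) - R (1,1) (1,1)*S (0,0) (1,1)*T (0,1) (1,0) + R (0,0) (1,1)*S (1,1) (1,1)*T (1,1) (1,1) - R (0,0) (1,1)*S (0,1) (0,1)*T (0,1) (0,1) = 0 := by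
    have h := hent (0, 0, 1) (1, 1, 1)
    simp [hR, hS, hT] at h
    linear_combination h
  have u7 : R (0,1) (0,1)*S (0,0) (1,1)*T (1,1) (0,0) - R (1,0) (1,0)*S (0,1) (1,0)*T (1,0) (0,1) - R (0,1) (1,0)*S (0,0) (0,0)*T (1,0) (1,0) + R (0,1) (1,0)*S (1,0) (1,0)*T (0,0) (0,0) = 0 := by
    have h := hent (0, 1, 0) (1, 0, 0)
    simp [hR, hS, hT] at h
    linear_combination h
  have u8 : -R (1,1) (1,1)*S (0,0) (1,1)*T (1,0) (1,0) + R (0,1) (0,1)*S (0,0) (1,1)*T (1,1) (1,1) + R (0,1) (1,0)*S (1,0) (1,0)*T (0,0) (1,1) - R (0,0) (1,1)*S (0,1) (0,1)*T (1,0) (0,1) = 0 := by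
    have h := hent (0, 1, 0) (1, 1, 1)
    simp [hR, hS, hT] at h
    linear_combination h
  have u9 : R (0,1) (0,1)*S (0,1) (1,0)*T (1,0) (0,1) - R (1,0) (1,0)*S (0,0) (1,1)*T (1,1) (0,0) + R (0,1) (1,0)*S (1,1) (1,1)*T (0,1) (0,1) - R (0,1) (1,0)*S (0,1) (0,1)*T (1,1) (1,1) = 0 := by
    have h := hent (0, 1, 1) (1, 0, 1)
    simp [hR, hS, hT] at h
    linear_combination h
  have u10 : -R (1,1) (1,1)*S (0,1) (1,0)*T (1,1) (1,1) + R (0,1) (0,1)*S (0,1) (1,0)*T (1,0) (1,0) + R (0,1) (1,0)*S (1,1) (1,1)*T (0,1) (1,0) - R (0,0) (1,1)*S (0,0) (0,0)*T (1,1) (0,0) = 0 := by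
    have h := hent (0, 1, 1) (1, 1, 0)
    simp [hR, hS, hT] at h
    linear_combination h
  have u11 : -R (1,1) (1,1)*S (1,1) (1,1)*T (0,0) (1,1) + R (1,0) (1,0)*S (1,0) (1,0)*T (0,0) (1,1) + R (1,0) (0,1)*S (0,0) (1,1)*T (1,1) (1,1) - R (0,0) (1,1)*S (1,0) (0,1)*T (0,0) (0,0) = 0 := by
    have h := hent (1, 0, 0) (1, 1, 1)
    simp [hR, hS, hT] at h
    linear_combination h
  have u12 : -R (1,1) (1,1)*S (1,0) (1,0)*T (0,1) (1,0) + R (1,0) (1,0)*S (1,1) (1,1)*T (0,1) (1,0) + R (1,0) (0,1)*S (0,1) (1,0)*T (1,0) (1,0) - R (0,0) (1,1)*S (1,1) (0,0)*T (0,1) (0,1) = 0 := by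
    have h := hent (1, 0, 1) (1, 1, 0)
    simp [hR, hS, hT] at h
    linear_combination h
  obtain ⟨g1, g2, g3, g4⟩ := ev_scalar (R (0,0) (0,0)) (R (1,1) (1,1)) (R (0,1) (0,1)) (R (1,0) (1,0)) (R (0,1) (1,0)) (R (1,0) (0,1)) (R (0,0) (1,1)) (R (1,1) (0,0)) (S (0,0) (0,0)) (S (1,1) (1,1)) (S (0,1) (0,1)) (S (1,0) (1,0)) (S (0,1) (1,0)) (S (1,0) (0,1)) (S (0,0) (1,1)) (S (1,1) (0,0)) (T (0,0) (0,0)) (T (1,1) (1,1)) (T (0,1) (0,1)) (T (1,0) (1,0)) (T (0,1) (1,0)) (T (1,0) (0,1)) (T (0,0) (1,1)) (T (1,1) (0,0))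
    hrc1 hrc2 hrd1 hrd2 hsc1 hsc2 hsd1 hsd2 htc1 htc2 htd1 htd2
    d1 d2 d3 d4 u1 u2 u3 u4 u5 u6 u7 u8 u9 u10 u11 u12
  refine ⟨g1, g2, ?_, ?_⟩
  · rintro i (rfl | rfl)
    · simpa using g3
    · simpa using g4
  · apply mul_left_cancel₀ (mul_ne_zero hrd1 hrd2)
    linear_combination (R (1,1) (0,0)*S (0,0) (1,1)*T (0,1) (1,0))*d1 - (R (1,1) (0,0)*S (0,1) (1,0)*T (0,0) (1,1))*d2
end
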